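/- Let s > 11/2 and suppose (ξ_k)_{k≥1} satisfies Σ_{k≥1} ‖ξ_k‖_{H^σ} < ∞ for every σ ≥ 0. Define g(X) and h^k(X) as for the stochastic two-component Camassa–Holm system: for X = (u,η), g(X) = (−u ∂_x u + ½ (1−∂²_x)^{-1} Σ_k 𝓛²_{ξ_k} (1−∂²_x) u, −u ∂_x η + ½ Σ_k 𝓛²_{ξ_k} η) and h^k(X) = (−(1−∂²_x)^{-1} 𝓛_{ξ_k} (1−∂²_x) u, −𝓛_{ξ_k} η). Then there is a constant C > 0 (depending on s and (ξ_k)) such that for all X = (u,η), Y = (v,ρ) ∈ H^s(𝕋) × H^{s-1}(𝕋): 2 (g(X) − g(Y), X − Y)_{H^{s-2}×H^{s-3}} + Σ_{k=1}^∞ ‖h^k(X) − h^k(Y)‖²_{H^{s-2}×H^{s-3}} ≤ C (1 + ‖X‖²_{H^s×H^{s-1}} + ‖Y‖²_{H^s×H^{s-1}}) ‖X − Y‖²_{H^{s-2}×H^{s-3}}. -/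

import Mathlib

noncomputable section
open scoped BigOperators

/-- A (complex-valued) function on the torus `𝕋 = ℝ/2πℤ`, represented by its sequence of
Fourier coefficients `f̂ : ℤ → ℂ`. -/
abbrev FC := ℤ → ℂ

namespace FC

/-- The Sobolev weight `(1+k²)^s`. -/
def wt (s : ℝ) (k : ℤ) : ℝ := (1 + (k : ℝ) ^ 2) ^ s

/-- `c` represents a function belonging to the Sobolev space `H^s(𝕋)`. -/
def memHs (s : ℝ) (c : FC) : Prop := Summable fun k : ℤ => wt s k * ‖c k‖ ^ 2

/-- The `H^s(𝕋)` norm: `‖f‖²_{H^s} = Σ_{k∈ℤ} (1+k²)^s |f̂(k)|²`. -/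
def hsNorm (s : ℝ) (c : FC) : ℝ := Real.sqrt (∑' k : ℤ, wt s k * ‖c k‖ ^ 2)

/-- The `H^s(𝕋)` inner product `(f,g)_{H^s} = Σ_{k∈ℤ} (1+k²)^s f̂(k) conj(ĝ(k))`
(its real part; the sum is real for real-valued functions). -/
def hsInner (s : ℝ) (c d : FC) : ℝ :=
  (∑' k : ℤ, ((wt s k : ℂ) * (c k * (starRingEnd ℂ) (d k)))).re

/-- `c` represents a real-valued function (conjugate-symmetric coefficients). -/
def isReal (c : FC) : Prop := ∀ k : ℤ, c (-k) = (starRingEnd ℂ) (c k)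

/-- The derivative `∂ₓ`, i.e. the Fourier multiplier `ik`. -/
def D1 (c : FC) : FC := fun k => Complex.I * (k : ℂ) * c k

/-- The pointwise product of functions, i.e. convolution of Fourier coefficients. -/
def mul (c d : FC) : FC := fun k => ∑' j : ℤ, c j * d (k - j)

/-- The represented function, evaluated at `x ∈ ℝ`. -/
def eval (c : FC) (x : ℝ) : ℂ := ∑' k : ℤ, c k * Complex.exp (Complex.I * (k : ℂ) * (x : ℂ))

/-- The `L^∞` norm (supremum of the represented periodic function over ℝ). -/
def linfty (c : FC) : ℝ := ⨆ x : ℝ, ‖eval c x‖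

/-- The `W^{1,∞}` norm. -/
def w1infty (c : FC) : ℝ := linfty c + linfty (D1 c)

/-- A Fourier multiplier operator with real symbol `m`. -/
def mult (m : ℤ → ℝ) (c : FC) : FC := fun k => (m k : ℂ) * c k

/-- The operator `(1-∂ₓ²)⁻¹`, i.e. the Fourier multiplier `(1+k²)⁻¹`. -/
def helmInv : FC → FC := mult fun k => (1 + (k : ℝ) ^ 2)⁻¹

/-- The operator `1-∂ₓ²`, i.e. the Fourier multiplier `1+k²`. -/
def helm : FC → FC := mult fun k => 1 + (k : ℝ) ^ 2

/-- The operator `T̃_ε = (1-ε²∂ₓ²)⁻¹`, i.e. the Fourier multiplier `(1+ε²k²)⁻¹`. -/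
def T (ε : ℝ) : FC → FC := mult fun k => (1 + ε ^ 2 * (k : ℝ) ^ 2)⁻¹

/-- The periodic Hilbert transform, i.e. the Fourier multiplier `-i·sgn(k)`. -/
def hilbert (c : FC) : FC := fun k => -Complex.I * (Int.sign k : ℂ) * c k

/-- The Friedrichs-type mollifier `J_ε`, the Fourier multiplier `ĵ(εk)`. -/
def Jmol (jhat : ℝ → ℝ) (ε : ℝ) : FC → FC := mult fun k => jhat (ε * (k : ℝ))

/-- The generalized Lie derivative `𝓛_ξ f = ξ ∂ₓ f + (∂ₓ ξ) f`. -/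
def lie (ξ c : FC) : FC := mul ξ (D1 c) + mul (D1 ξ) c

/-- `𝓛²_ξ f = 𝓛_ξ (𝓛_ξ f)`. -/
def lie2 (ξ c : FC) : FC := lie ξ (lie ξ c)

/-- The coefficientwise sum `Σ_{k∈ℕ} F k` of a sequence of functions. -/
def tsumFC (F : ℕ → FC) : FC := fun m => ∑' k : ℕ, F k m

/-- The norm on the product space `H^{s₁}×H^{s₂}`. -/
def pairNorm (s₁ s₂ : ℝ) (c d : FC) : ℝ := Real.sqrt (hsNorm s₁ c ^ 2 + hsNorm s₂ d ^ 2)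

/-- The inner product on the product space `H^{s₁}×H^{s₂}`:
`((c₁,d₁),(c₂,d₂)) ↦ (c₁,c₂)_{H^{s₁}} + (d₁,d₂)_{H^{s₂}}`. -/
def pairInner (s₁ s₂ : ℝ) (c₁ d₁ c₂ d₂ : FC) : ℝ := hsInner s₁ c₁ c₂ + hsInner s₂ d₁ d₂

end FC

/-- First component of the singular drift of the stochastic two-component CH system:
`−u ∂ₓ u + ½ (1−∂ₓ²)⁻¹ Σ_k 𝓛²_{ξ_k} (1−∂ₓ²) u`. -/
def gCH1 (ξ : ℕ → FC) (u : FC) : FC :=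
  -(FC.mul u (FC.D1 u)) +
    (1 / 2 : ℝ) • FC.helmInv (FC.tsumFC fun k => FC.lie2 (ξ k) (FC.helm u))

/-- Second component of the singular drift of the stochastic two-component CH system:
`−u ∂ₓ η + ½ Σ_k 𝓛²_{ξ_k} η`. -/
def gCH2 (ξ : ℕ → FC) (u η : FC) : FC :=
  -(FC.mul u (FC.D1 η)) + (1 / 2 : ℝ) • FC.tsumFC fun k => FC.lie2 (ξ k) η

/-- First component of the diffusion coefficient `h^k`:
`−(1−∂ₓ²)⁻¹ 𝓛_{ξ_k} (1−∂ₓ²) u`. -/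
def hCH1 (ξ : ℕ → FC) (k : ℕ) (u : FC) : FC :=
  -(FC.helmInv (FC.lie (ξ k) (FC.helm u)))

/-- Second component of the diffusion coefficient `h^k`: `−𝓛_{ξ_k} η`. -/
def hCH2 (ξ : ℕ → FC) (k : ℕ) (η : FC) : FC := -(FC.lie (ξ k) η)

/-!
Both estimates hidden in the claim are cancellations that appear after symmetrization on the
Fourier side. For the transport term, `2 Re (u ∂ₓw, w)_{H^σ}` is an average over the modes of `u`
of expressions whose kernel gains the derivative that falls on `w`. For the noise term,
`(𝓛²_ξ f, f)_{H^σ} + ‖𝓛_ξ f‖²_{H^σ}` is a quartic form in which the modes `p`, `q` of the real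
function `ξ` may be exchanged and conjugated. The averaged kernel is made of second-order mixed
differences of the Sobolev weight `x ↦ (1 + x²)^σ`, so both derivatives falling on `f` are
absorbed by weights on `p` and `q`. Summation over the noise coefficients then only needs their
squares to be summable in a weighted Wiener algebra.

In the system the operator `1 - ∂ₓ²` intertwines `H^{s-2}` with `H^{s-4}`: the noise of the first
component is estimated for `(1 - ∂ₓ²)(u - v)` in `H^{s-4}`, that of the second one for `η - ρ`
in `H^{s-3}`.
-/

namespace FC

/-- The Japanese bracket `⟨x⟩^{2σ} = (1 + x²)^σ`, the extension of the Sobolev weight `wt σ` from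
`ℤ` to `ℝ`. -/
def bracket (σ x : ℝ) : ℝ := (1 + x ^ 2) ^ σ

section Bracket

variable {σ τ x y : ℝ}

lemma bracket_pos (σ x : ℝ) : 0 < bracket σ x := Real.rpow_pos_of_pos (by positivity) σ

lemma bracket_neg (σ x : ℝ) : bracket σ (-x) = bracket σ x := by rw [bracket, neg_sq, bracket]

lemma bracket_one (x : ℝ) : bracket 1 x = 1 + x ^ 2 := Real.rpow_one _

lemma bracket_add (σ τ x : ℝ) : bracket (σ + τ) x = bracket σ x * bracket τ x :=
  Real.rpow_add (by positivity) σ τ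

lemma bracket_add_one (σ x : ℝ) : bracket (σ + 1) x = bracket σ x * (1 + x ^ 2) := by
  rw [bracket_add, bracket_one]

lemma bracket_eq_half_mul_half (σ x : ℝ) : bracket σ x = bracket (σ / 2) x * bracket (σ / 2) x := by
  rw [← bracket_add, add_halves]

lemma bracket_mono_exponent (h : σ ≤ τ) (x : ℝ) : bracket σ x ≤ bracket τ x :=
  Real.rpow_le_rpow_of_exponent_le (by nlinarith [sq_nonneg x]) h

lemma bracket_mono_abs (hσ : 0 ≤ σ) (h : |x| ≤ |y|) : bracket σ x ≤ bracket σ y :=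
  Real.rpow_le_rpow (by positivity) (by linarith [sq_le_sq.2 h]) hσ

lemma abs_le_bracket_half (x : ℝ) : |x| ≤ bracket (1 / 2) x := by
  rw [bracket, ← Real.sqrt_eq_rpow]
  exact Real.le_sqrt_of_sq_le (by rw [sq_abs]; linarith)

lemma abs_le_bracket_one (x : ℝ) : |x| ≤ bracket 1 x :=
  (abs_le_bracket_half x).trans (bracket_mono_exponent (by norm_num) x)

lemma sq_mul_bracket_le (σ x : ℝ) : x ^ 2 * bracket σ x ≤ bracket (σ + 1) x := by
  rw [bracket_add_one]
  linarith [bracket_pos σ x]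

lemma one_add_sq_le_mul_sub (x y : ℝ) : 1 + x ^ 2 ≤ 2 * ((1 + y ^ 2) * (1 + (x - y) ^ 2)) := by
  nlinarith [sq_nonneg (x - 2 * y), sq_nonneg (y * (x - y)), sq_nonneg (x - y)]

lemma bracket_le_mul_bracket_sub (hσ : 0 ≤ σ) (x y : ℝ) :
    bracket σ x ≤ 2 ^ σ * (bracket σ y * bracket σ (x - y)) := by
  unfold bracket
  rw [← Real.mul_rpow (by positivity) (by positivity),
    ← Real.mul_rpow (by positivity) (by positivity)]
  exact Real.rpow_le_rpow (by positivity) (one_add_sq_le_mul_sub x y) hσ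

lemma bracket_le_mul_halves (hσ : 0 ≤ σ) (x y : ℝ) :
    bracket σ x ≤ 2 ^ (σ / 2) * (bracket (σ / 2) (x - y) *
      (bracket (σ / 2) x * bracket (σ / 2) y)) := by
  have h := mul_le_mul_of_nonneg_right (bracket_le_mul_bracket_sub (σ := σ / 2) (by positivity) x y)
    (bracket_pos (σ / 2) x).le
  rw [← bracket_eq_half_mul_half] at h
  linarith

end Bracket

/-! ### Differences of brackets -/

section BracketDifferences

variable {σ : ℝ}

lemma one_sub_rpow_le {t : ℝ} (ht : 0 ≤ t) (ht' : t ≤ 1) (hσ : 0 ≤ σ) :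
    1 - t ^ σ ≤ (1 + σ) * (1 - t) := by
  have bernoulli : 1 + (σ + 1) * (t - 1) ≤ t ^ (σ + 1) := by
    simpa using one_add_mul_self_le_rpow_one_add (s := t - 1) (p := σ + 1)
      (by linarith) (by linarith)
  have anti : t ^ (σ + 1) ≤ t ^ σ :=
    Real.rpow_le_rpow_of_exponent_ge_of_imp ht ht' (by linarith) (fun _ _ => by linarith)
  linarith

lemma abs_mul_bracket_sub_le_of_abs_le (hσ : 0 ≤ σ) {k l : ℝ} (h : |l| ≤ |k|) :
    |k| * (bracket σ k - bracket σ l) ≤ 2 * (1 + σ) * |k - l| * bracket σ k := by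
  have hk : 0 < 1 + k ^ 2 := by positivity
  have hlk : l ^ 2 ≤ k ^ 2 := sq_le_sq.2 h
  have ratio : bracket σ k - bracket σ l ≤
      (1 + σ) * (k ^ 2 - l ^ 2) / (1 + k ^ 2) * bracket σ k := by
    have hl : bracket σ l = ((1 + l ^ 2) / (1 + k ^ 2)) ^ σ * bracket σ k := by
      rw [bracket, bracket, ← Real.mul_rpow (by positivity) hk.le, div_mul_cancel₀ _ hk.ne']
    have hdiff : 1 - (1 + l ^ 2) / (1 + k ^ 2) = (k ^ 2 - l ^ 2) / (1 + k ^ 2) := by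
      field_simp; ring
    have := one_sub_rpow_le (t := (1 + l ^ 2) / (1 + k ^ 2)) (by positivity)
      ((div_le_one hk).2 (by linarith)) hσ
    rw [hdiff, ← mul_div_assoc] at this
    rw [hl]
    nlinarith [bracket_pos σ k]
  have hsq : k ^ 2 - l ^ 2 ≤ |k - l| * (2 * |k|) := by
    calc k ^ 2 - l ^ 2 = (k - l) * (k + l) := by ring
      _ ≤ |k - l| * |k + l| := by rw [← abs_mul]; exact le_abs_self _
      _ ≤ |k - l| * (2 * |k|) := by gcongr; linarith [abs_add_le k l]
  have hfrac : |k| * ((k ^ 2 - l ^ 2) / (1 + k ^ 2)) ≤ 2 * |k - l| := by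
    rw [mul_div_assoc', div_le_iff₀ hk]
    nlinarith [mul_le_mul_of_nonneg_left hsq (abs_nonneg k), sq_abs k, abs_nonneg (k - l)]
  calc |k| * (bracket σ k - bracket σ l)
      ≤ |k| * ((1 + σ) * (k ^ 2 - l ^ 2) / (1 + k ^ 2) * bracket σ k) := by gcongr
    _ = (1 + σ) * (|k| * ((k ^ 2 - l ^ 2) / (1 + k ^ 2))) * bracket σ k := by ring
    _ ≤ (1 + σ) * (2 * |k - l|) * bracket σ k := by
      have := (bracket_pos σ k).le
      gcongr
    _ = 2 * (1 + σ) * |k - l| * bracket σ k := by ring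

lemma abs_add_mul_abs_bracket_sub_le (hσ : 0 ≤ σ) (k l : ℝ) :
    |k + l| * |bracket σ k - bracket σ l| ≤
      4 * (1 + σ) * |k - l| * (bracket σ k + bracket σ l) := by
  wlog h : |l| ≤ |k| generalizing k l
  · have := this l k (le_of_not_ge h)
    rwa [add_comm, abs_sub_comm, abs_sub_comm k, add_comm (bracket σ k)]
  rw [abs_of_nonneg (sub_nonneg.2 (bracket_mono_abs hσ h))]
  have hl := (bracket_pos σ l).le
  calc |k + l| * (bracket σ k - bracket σ l)
      ≤ 2 * |k| * (bracket σ k - bracket σ l) := by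
        have := sub_nonneg.2 (bracket_mono_abs hσ h)
        gcongr
        linarith [abs_add_le k l]
    _ = 2 * (|k| * (bracket σ k - bracket σ l)) := by ring
    _ ≤ 2 * (2 * (1 + σ) * |k - l| * bracket σ k) := by
        gcongr ?_ * ?_; exact abs_mul_bracket_sub_le_of_abs_le hσ h
    _ ≤ 2 * (2 * (1 + σ) * |k - l| * (bracket σ k + bracket σ l)) := by gcongr; linarith
    _ = _ := by ring

lemma abs_mul_bracket_sub_mul_bracket_le (hσ : 0 ≤ σ) (k l : ℝ) :
    |k * bracket σ k - l * bracket σ l| ≤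
      (5 / 2 + 2 * σ) * |k - l| * (bracket σ k + bracket σ l) := by
  have split : k * bracket σ k - l * bracket σ l =
      1 / 2 * ((k - l) * (bracket σ k + bracket σ l) +
        (k + l) * (bracket σ k - bracket σ l)) := by ring
  have hsum : 0 < bracket σ k + bracket σ l := add_pos (bracket_pos σ k) (bracket_pos σ l)
  have htri := abs_add_le ((k - l) * (bracket σ k + bracket σ l))
    ((k + l) * (bracket σ k - bracket σ l))
  rw [abs_mul, abs_mul, abs_of_pos hsum] at htri
  rw [split, abs_mul, abs_of_pos one_half_pos]
  linarith [abs_add_mul_abs_bracket_sub_le hσ k l]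

lemma abs_mul_bracket_sub_swap_le (hσ : 0 ≤ σ) (k l : ℝ) :
    |l * bracket σ k - k * bracket σ l| ≤
      (5 / 2 + 2 * σ) * |k - l| * (bracket σ k + bracket σ l) := by
  have split : l * bracket σ k - k * bracket σ l =
      1 / 2 * ((l - k) * (bracket σ k + bracket σ l) +
        (k + l) * (bracket σ k - bracket σ l)) := by ring
  have hsum : 0 < bracket σ k + bracket σ l := add_pos (bracket_pos σ k) (bracket_pos σ l)
  have htri := abs_add_le ((l - k) * (bracket σ k + bracket σ l))
    ((k + l) * (bracket σ k - bracket σ l))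
  rw [abs_mul, abs_mul, abs_of_pos hsum, abs_sub_comm l] at htri
  rw [split, abs_mul, abs_of_pos one_half_pos]
  linarith [abs_add_mul_abs_bracket_sub_le hσ k l]

/-- The kernel of the commutator of `⟨∂ₓ⟩^{2σ}` with a transport operator loses no derivative of the
transported function. -/
lemma exists_transportKernel_le (hσ : 0 ≤ σ) : ∃ C > 0, ∀ k l : ℝ,
    |l * bracket σ k - k * bracket σ l| ≤
      C * (bracket ((σ + 1) / 2) (k - l) * (bracket (σ / 2) k * bracket (σ / 2) l)) := by
  refine ⟨2 * (5 / 2 + 2 * σ) * 2 ^ (σ / 2), by positivity, fun k l => ?_⟩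
  have hk := bracket_le_mul_halves hσ k l
  have hl := bracket_le_mul_halves hσ l k
  rw [← neg_sub k l, bracket_neg, mul_comm (bracket (σ / 2) l)] at hl
  calc |l * bracket σ k - k * bracket σ l|
      ≤ (5 / 2 + 2 * σ) * |k - l| * (bracket σ k + bracket σ l) :=
        abs_mul_bracket_sub_swap_le hσ k l
    _ ≤ (5 / 2 + 2 * σ) * bracket (1 / 2) (k - l) *
          (2 * (2 ^ (σ / 2) * (bracket (σ / 2) (k - l) *
            (bracket (σ / 2) k * bracket (σ / 2) l)))) := by
        have := (bracket_pos σ k).le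
        have := (bracket_pos σ l).le
        have := (bracket_pos (1 / 2) (k - l)).le
        gcongr
        · exact abs_le_bracket_half (k - l)
        · linarith
    _ = _ := by rw [add_div, bracket_add]; ring

end BracketDifferences

/-! ### Second differences -/

section SecondDifferences

variable {σ : ℝ}

lemma hasDerivAt_bracket (σ x : ℝ) :
    HasDerivAt (bracket σ) (2 * σ * (x * bracket (σ - 1) x)) x := by
  have hsq : HasDerivAt (fun y : ℝ => 1 + y ^ 2) (2 * x) x := by
    simpa using (hasDerivAt_pow 2 x).const_add 1
  exact (hsq.rpow_const (p := σ) (Or.inl (by positivity))).congr_deriv (by rw [bracket]; ring)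

lemma hasDerivAt_deriv_bracket (σ x : ℝ) :
    HasDerivAt (fun y => 2 * σ * (y * bracket (σ - 1) y))
      (2 * σ * (bracket (σ - 1) x + 2 * (σ - 1) * (x ^ 2 * bracket (σ - 1 - 1) x))) x := by
  exact (((hasDerivAt_id' x).mul (hasDerivAt_bracket (σ - 1) x)).const_mul (2 * σ)).congr_deriv
    (by ring)

lemma abs_deriv_deriv_bracket_le (σ x : ℝ) :
    |2 * σ * (bracket (σ - 1) x + 2 * (σ - 1) * (x ^ 2 * bracket (σ - 1 - 1) x))| ≤
      2 * |σ| * (1 + 2 * |σ - 1|) * bracket (σ - 1) x := by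
  have hsq : x ^ 2 * bracket (σ - 1 - 1) x ≤ bracket (σ - 1) x := by
    simpa using sq_mul_bracket_le (σ - 1 - 1) x
  have hpos : 0 < bracket (σ - 1) x := bracket_pos _ x
  have hpos' : 0 ≤ x ^ 2 * bracket (σ - 1 - 1) x := mul_nonneg (sq_nonneg x) (bracket_pos _ x).le
  rw [abs_mul, abs_mul, abs_two, mul_assoc (2 * |σ|)]
  gcongr
  calc |bracket (σ - 1) x + 2 * (σ - 1) * (x ^ 2 * bracket (σ - 1 - 1) x)|
      ≤ bracket (σ - 1) x + 2 * |σ - 1| * (x ^ 2 * bracket (σ - 1 - 1) x) := by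
        refine (abs_add_le _ _).trans_eq ?_
        rw [abs_of_pos hpos, abs_mul, abs_mul, abs_two, abs_of_nonneg hpos']
    _ ≤ bracket (σ - 1) x + 2 * |σ - 1| * bracket (σ - 1) x := by gcongr
    _ = _ := by ring

lemma abs_mixedDifference_le {f f' f'' : ℝ → ℝ} (hf : ∀ x, HasDerivAt f (f' x) x)
    (hf' : ∀ x, HasDerivAt f' (f'' x) x) {k p q B : ℝ}
    (hB : ∀ x, |x - k| ≤ |p| + |q| → |f'' x| ≤ B) :
    |f (k - p) + f (k - q) - f k - f (k - p - q)| ≤ B * (|p| * |q|) := by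
  have hf'_diff : ∀ x, |x - k| ≤ |p| → |f' x - f' (x - q)| ≤ B * |q| := by
    intro x hx
    simpa [Real.norm_eq_abs] using Convex.norm_image_sub_le_of_norm_hasDerivWithin_le
      (s := Metric.closedBall k (|p| + |q|)) (x := x - q) (y := x)
      (fun x _ => (hf' x).hasDerivWithinAt)
      (fun y hy => hB y (by simpa [Real.dist_eq] using hy)) (convex_closedBall _ _)
      (by
        rw [Metric.mem_closedBall, Real.dist_eq, sub_right_comm]
        linarith [abs_sub (x - k) q])
      (by rw [Metric.mem_closedBall, Real.dist_eq]; linarith [abs_nonneg q])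
  have hf_diff := Convex.norm_image_sub_le_of_norm_hasDerivWithin_le
    (f := fun x => f x - f (x - q)) (s := Metric.closedBall k |p|) (x := k) (y := k - p)
    (fun x _ => ((hf x).sub ((hf (x - q)).comp_sub_const x q)).hasDerivWithinAt)
    (fun y hy => hf'_diff y (by simpa [Real.dist_eq] using hy)) (convex_closedBall _ _)
    (by simp) (by simp)
  simp only [Real.norm_eq_abs, sub_sub_cancel_left, abs_neg] at hf_diff
  calc |f (k - p) + f (k - q) - f k - f (k - p - q)|
      = |f (k - p) - f (k - p - q) - (f k - f (k - q))| := by congr 1; ring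
    _ ≤ B * |q| * |p| := hf_diff
    _ = B * (|p| * |q|) := by ring

lemma bracket_le_of_abs_sub_le (hσ : 0 ≤ σ) {p q y z : ℝ} (h : |y - z| ≤ 2 * (|p| + |q|)) :
    bracket σ y ≤ 16 ^ σ * (bracket σ p * bracket σ q * bracket σ z) := by
  have base : 1 + y ^ 2 ≤ 16 * ((1 + p ^ 2) * (1 + q ^ 2) * (1 + z ^ 2)) := by
    have hyz : (y - z) ^ 2 ≤ 8 * (p ^ 2 + q ^ 2) := by
      rw [← sq_abs (y - z), ← sq_abs p, ← sq_abs q]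
      nlinarith [abs_nonneg (y - z), sq_nonneg (|p| - |q|)]
    nlinarith [one_add_sq_le_mul_sub y z, mul_nonneg (sq_nonneg p) (sq_nonneg q), sq_nonneg z,
      mul_nonneg (mul_nonneg (sq_nonneg p) (sq_nonneg q)) (sq_nonneg z)]
  unfold bracket
  rw [← Real.mul_rpow (by positivity) (by positivity), ← Real.mul_rpow (by positivity)
    (by positivity), ← Real.mul_rpow (by positivity) (by positivity)]
  exact Real.rpow_le_rpow (by positivity) base hσ

/-- The point is that the right-hand side is symmetric in the two ends `k` and `k - p - q`. -/
lemma bracket_le_of_abs_sub_le_add (hσ : 0 ≤ σ) {k p q y : ℝ} (h : |y - k| ≤ |p| + |q|) :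
    bracket σ y ≤ 16 ^ σ * (bracket σ p * bracket σ q *
      (bracket (σ / 2) k * bracket (σ / 2) (k - p - q))) := by
  have hk : |y - k| ≤ 2 * (|p| + |q|) := by linarith [abs_nonneg p, abs_nonneg q]
  have hl : |y - (k - p - q)| ≤ 2 * (|p| + |q|) := by
    rw [show y - (k - p - q) = (y - k) + (p + q) by ring]
    linarith [abs_add_le (y - k) (p + q), abs_add_le p q]
  have h16 : (16 : ℝ) ^ σ = 16 ^ (σ / 2) * 16 ^ (σ / 2) := by
    rw [← Real.rpow_add (by norm_num), add_halves]
  rw [bracket_eq_half_mul_half σ y, bracket_eq_half_mul_half σ p, bracket_eq_half_mul_half σ q,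
    h16]
  calc _ ≤ _ := mul_le_mul (bracket_le_of_abs_sub_le (by positivity) hk)
        (bracket_le_of_abs_sub_le (by positivity) hl) (bracket_pos _ y).le
        ((bracket_pos _ y).le.trans (bracket_le_of_abs_sub_le (by positivity) hk))
    _ = _ := by ring

lemma abs_bracket_mixedDifference_le {τ : ℝ} (hσ : 0 ≤ σ) (hτ : τ - 1 ≤ σ) (k p q : ℝ) :
    |bracket τ (k - p) + bracket τ (k - q) - bracket τ k - bracket τ (k - p - q)| ≤
      2 * |τ| * (1 + 2 * |τ - 1|) * 16 ^ σ * (bracket (σ + 1) p * bracket (σ + 1) q *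
        (bracket (σ / 2) k * bracket (σ / 2) (k - p - q))) := by
  have hpos := bracket_pos
  calc _ ≤ 2 * |τ| * (1 + 2 * |τ - 1|) * (16 ^ σ * (bracket σ p * bracket σ q *
          (bracket (σ / 2) k * bracket (σ / 2) (k - p - q)))) * (|p| * |q|) := by
        refine abs_mixedDifference_le (hasDerivAt_bracket τ) (hasDerivAt_deriv_bracket τ)
          fun x hx => (abs_deriv_deriv_bracket_le τ x).trans ?_
        gcongr
        exact (bracket_mono_exponent hτ x).trans (bracket_le_of_abs_sub_le_add hσ hx)
    _ ≤ 2 * |τ| * (1 + 2 * |τ - 1|) * (16 ^ σ * (bracket σ p * bracket σ q *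
          (bracket (σ / 2) k * bracket (σ / 2) (k - p - q)))) * (bracket 1 p * bracket 1 q) := by
        have := fun τ x => (hpos τ x).le
        gcongr ?_ * (?_ * ?_)
        · exact mul_nonneg (by positivity) (mul_nonneg (by positivity) (mul_nonneg
            (mul_nonneg (this _ _) (this _ _)) (mul_nonneg (this _ _) (this _ _))))
        · exact this _ _
        · exact abs_le_bracket_one p
        · exact abs_le_bracket_one q
    _ = _ := by rw [bracket_add, bracket_add]; ring

lemma abs_add_mul_bracket_difference_le (hσ : 0 ≤ σ) (k p q : ℝ) :
    |(p + q) * (k * bracket σ k - (k - p - q) * bracket σ (k - p - q))| ≤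
      (10 + 8 * σ) * 16 ^ σ * (bracket (σ + 1) p * bracket (σ + 1) q *
        (bracket (σ / 2) k * bracket (σ / 2) (k - p - q))) := by
  set l := k - p - q with hl
  set Y := 16 ^ σ * (bracket σ p * bracket σ q * (bracket (σ / 2) k * bracket (σ / 2) l)) with hY
  have hkl : k - l = p + q := by rw [hl]; ring
  have hk : bracket σ k ≤ Y :=
    bracket_le_of_abs_sub_le_add hσ (by rw [sub_self, abs_zero]; positivity)
  have hl' : bracket σ l ≤ Y :=
    bracket_le_of_abs_sub_le_add hσ (by rw [abs_sub_comm, hkl]; exact abs_add_le p q)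
  have hk0 := (bracket_pos σ k).le
  have hl0 := (bracket_pos σ l).le
  have hsq : |p + q| * |p + q| ≤ 2 * ((1 + p ^ 2) * (1 + q ^ 2)) := by
    rw [abs_mul_abs_self]
    nlinarith [sq_nonneg (p - q), mul_nonneg (sq_nonneg p) (sq_nonneg q)]
  calc |(p + q) * (k * bracket σ k - l * bracket σ l)|
      ≤ |p + q| * ((5 / 2 + 2 * σ) * |p + q| * (bracket σ k + bracket σ l)) := by
        rw [abs_mul]
        gcongr
        rw [← hkl]
        exact abs_mul_bracket_sub_mul_bracket_le hσ k l
    _ = (5 / 2 + 2 * σ) * (|p + q| * |p + q|) * (bracket σ k + bracket σ l) := by ring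
    _ ≤ (5 / 2 + 2 * σ) * (2 * ((1 + p ^ 2) * (1 + q ^ 2))) * (Y + Y) := by gcongr
    _ = _ := by rw [hY, bracket_add_one, bracket_add_one]; ring

end SecondDifferences

/-! ### The kernel of the noise terms -/

/-- The kernel of the quadratic form `4 ((𝓛²_ξ f, f)_{H^σ} + ‖𝓛_ξ f‖²_{H^σ})`, symmetrized over the
two modes `p`, `q` of `ξ` and over the two modes `k`, `k - p - q` of `f`. -/
def noiseKernel (σ k p q : ℝ) : ℝ :=
  2 * ((k - p) ^ 2 * bracket σ (k - p) + (k - q) ^ 2 * bracket σ (k - q)) -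
    (k + (k - p - q)) * (k * bracket σ k + (k - p - q) * bracket σ (k - p - q))

lemma noiseKernel_eq (σ k p q : ℝ) :
    noiseKernel σ k p q =
      2 * (bracket (σ + 1) (k - p) + bracket (σ + 1) (k - q) - bracket (σ + 1) k -
          bracket (σ + 1) (k - p - q)) -
        2 * (bracket σ (k - p) + bracket σ (k - q) - bracket σ k - bracket σ (k - p - q)) +
        (p + q) * (k * bracket σ k - (k - p - q) * bracket σ (k - p - q)) := by
  simp only [noiseKernel, bracket_add_one]; ring

lemma exists_noiseKernel_le {σ : ℝ} (hσ : 0 ≤ σ) : ∃ C > 0, ∀ k p q : ℝ,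
    |noiseKernel σ k p q| ≤ C * (bracket (σ + 1) p * bracket (σ + 1) q *
      (bracket (σ / 2) k * bracket (σ / 2) (k - p - q))) := by
  refine ⟨2 * (2 * |σ + 1| * (1 + 2 * |σ + 1 - 1|) * 16 ^ σ) +
    2 * (2 * |σ| * (1 + 2 * |σ - 1|) * 16 ^ σ) + (10 + 8 * σ) * 16 ^ σ, by positivity,
    fun k p q => ?_⟩
  have hmain := abs_bracket_mixedDifference_le (τ := σ + 1) hσ (by linarith) k p q
  have hlow := abs_bracket_mixedDifference_le (τ := σ) hσ (by linarith) k p q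
  have hcross := abs_add_mul_bracket_difference_le hσ k p q
  rw [noiseKernel_eq]
  refine (abs_add_le _ _).trans ((add_le_add_left (abs_sub _ _) _).trans ?_)
  rw [abs_mul 2, abs_mul 2, abs_two]
  linarith

/-! ### Sobolev spaces as weighted `ℓ²` spaces -/

section Weights

variable {s t : ℝ}

lemma wt_pos (s : ℝ) (k : ℤ) : 0 < wt s k := bracket_pos s k

lemma wt_add (s t : ℝ) (k : ℤ) : wt (s + t) k = wt s k * wt t k := bracket_add s t k

lemma wt_eq_half_mul_half (s : ℝ) (k : ℤ) : wt s k = wt (s / 2) k * wt (s / 2) k :=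
  bracket_eq_half_mul_half s k

lemma wt_mono (h : s ≤ t) (k : ℤ) : wt s k ≤ wt t k := bracket_mono_exponent h k

end Weights

/-- The Bessel potential `(1 - ∂ₓ²)^{s/2}`, which maps `H^s` isometrically onto `ℓ²(ℤ)`. -/
def bessel (s : ℝ) : FC → FC := mult fun k => wt (s / 2) k

lemma norm_bessel_sq (s : ℝ) (c : FC) (k : ℤ) : ‖bessel s c k‖ ^ 2 = wt s k * ‖c k‖ ^ 2 := by
  rw [bessel, mult, norm_mul, Complex.norm_real, Real.norm_of_nonneg (wt_pos _ _).le,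
    wt_eq_half_mul_half s]
  ring

lemma memHs_iff_memℓp {s : ℝ} {c : FC} : memHs s c ↔ Memℓp (bessel s c) 2 := by
  rw [memℓp_gen_iff (by norm_num), memHs]
  simp only [ENNReal.toReal_ofNat, Real.rpow_two, norm_bessel_sq]

/-- The element of `ℓ²(ℤ)` corresponding to a function in `H^s`. -/
def memHs.toL2 {s : ℝ} {c : FC} (hc : memHs s c) : lp (fun _ : ℤ => ℂ) 2 :=
  ⟨bessel s c, memHs_iff_memℓp.1 hc⟩

section Sobolev

variable {s t : ℝ} {c d e : FC}

lemma memHs.mono (hc : memHs s c) (hts : t ≤ s) : memHs t c :=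
  Summable.of_nonneg_of_le (fun k => mul_nonneg (wt_pos t k).le (sq_nonneg _))
    (fun k => mul_le_mul_of_nonneg_right (wt_mono hts k) (sq_nonneg _)) hc

lemma memHs.add (hc : memHs s c) (hd : memHs s d) : memHs s (c + d) := by
  rw [memHs_iff_memℓp] at *
  convert hc.add hd using 1
  ext k
  exact mul_add _ _ _

lemma memHs.smul (a : ℂ) (hc : memHs s c) : memHs s (a • c) := by
  rw [memHs_iff_memℓp] at *
  convert hc.const_smul a using 1
  ext k
  exact mul_left_comm _ _ _

lemma memHs.neg (hc : memHs s c) : memHs s (-c) := by simpa using hc.smul (-1)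

lemma memHs.sub (hc : memHs s c) (hd : memHs s d) : memHs s (c - d) := by
  simpa [sub_eq_add_neg] using hc.add hd.neg

lemma toL2_add (hc : memHs s c) (hd : memHs s d) : (hc.add hd).toL2 = hc.toL2 + hd.toL2 :=
  Subtype.ext (funext fun _ => mul_add _ _ _)

lemma hsNorm_nonneg (s : ℝ) (c : FC) : 0 ≤ hsNorm s c := Real.sqrt_nonneg _

lemma hsNorm_sq (s : ℝ) (c : FC) : hsNorm s c ^ 2 = ∑' k, wt s k * ‖c k‖ ^ 2 :=
  Real.sq_sqrt (tsum_nonneg fun k => mul_nonneg (wt_pos s k).le (sq_nonneg _))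

lemma norm_toL2 (hc : memHs s c) : ‖hc.toL2‖ = hsNorm s c := by
  have h := lp.norm_rpow_eq_tsum (by norm_num) hc.toL2
  simp only [ENNReal.toReal_ofNat, Real.rpow_two] at h
  rw [← sq_eq_sq₀ (norm_nonneg _) (hsNorm_nonneg s c), h, hsNorm_sq]
  exact tsum_congr fun k => norm_bessel_sq s c k

lemma hsNorm_mono (hc : memHs s c) (hts : t ≤ s) : hsNorm t c ≤ hsNorm s c :=
  Real.sqrt_le_sqrt <| (hc.mono hts).tsum_le_tsum
    (fun k => mul_le_mul_of_nonneg_right (wt_mono hts k) (sq_nonneg _)) hc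

lemma hsNorm_sq_mono (hc : memHs s c) (hts : t ≤ s) : hsNorm t c ^ 2 ≤ hsNorm s c ^ 2 :=
  pow_le_pow_left₀ (hsNorm_nonneg t c) (hsNorm_mono hc hts) 2

lemma hsNorm_smul (a : ℂ) (s : ℝ) (c : FC) : hsNorm s (a • c) = ‖a‖ * hsNorm s c := by
  rw [← Real.sqrt_sq (norm_nonneg a), hsNorm, hsNorm, ← Real.sqrt_mul (sq_nonneg _),
    ← tsum_mul_left]
  congr 1
  refine tsum_congr fun k => ?_
  rw [Pi.smul_apply, norm_smul]
  ring

lemma hsNorm_neg (s : ℝ) (c : FC) : hsNorm s (-c) = hsNorm s c := by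
  simpa using hsNorm_smul (-1) s c

open scoped InnerProductSpace

lemma inner_toL2 (hc : memHs s c) (hd : memHs s d) :
    ⟪hd.toL2, hc.toL2⟫_ℂ = ∑' k, (wt s k : ℂ) * (c k * (starRingEnd ℂ) (d k)) := by
  rw [lp.inner_eq_tsum]
  refine tsum_congr fun k => ?_
  simp only [memHs.toL2, bessel, mult, RCLike.inner_apply, map_mul, Complex.conj_ofReal]
  rw [wt_eq_half_mul_half s]
  push_cast
  ring

lemma hsInner_eq_re_inner (hc : memHs s c) (hd : memHs s d) :
    hsInner s c d = (⟪hd.toL2, hc.toL2⟫_ℂ).re := by rw [inner_toL2, hsInner]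

lemma hasSum_hsInner (hc : memHs s c) (hd : memHs s d) :
    HasSum (fun k => wt s k * (c k * (starRingEnd ℂ) (d k)).re) (hsInner s c d) := by
  rw [hsInner_eq_re_inner hc hd]
  convert Complex.hasSum_re (lp.hasSum_inner hd.toL2 hc.toL2) using 2 with k
  simp only [memHs.toL2, bessel, mult, RCLike.inner_apply, map_mul, Complex.conj_ofReal]
  rw [wt_eq_half_mul_half s, ← mul_assoc, ← Complex.re_ofReal_mul]
  push_cast
  congr 1
  ring

lemma hsInner_comm (s : ℝ) (c d : FC) : hsInner s c d = hsInner s d c := by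
  rw [hsInner, ← Complex.conj_re, Complex.conj_tsum, hsInner]
  simp only [map_mul, Complex.conj_ofReal, Complex.conj_conj, mul_comm (c _)]

lemma hsInner_self (hc : memHs s c) : hsInner s c c = hsNorm s c ^ 2 := by
  rw [hsInner_eq_re_inner hc hc, ← norm_toL2 hc, ← inner_self_eq_norm_sq (𝕜 := ℂ)]
  rfl

lemma abs_hsInner_le (hc : memHs s c) (hd : memHs s d) :
    |hsInner s c d| ≤ hsNorm s c * hsNorm s d := by
  rw [hsInner_eq_re_inner hc hd, ← norm_toL2 hc, ← norm_toL2 hd, mul_comm]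
  exact (Complex.abs_re_le_norm _).trans (norm_inner_le_norm _ _)

lemma hsInner_add_left (hc : memHs s c) (hd : memHs s d) (he : memHs s e) :
    hsInner s (c + d) e = hsInner s c e + hsInner s d e := by
  rw [hsInner_eq_re_inner (hc.add hd) he, hsInner_eq_re_inner hc he, hsInner_eq_re_inner hd he,
    toL2_add, inner_add_right, Complex.add_re]

end Sobolev

section AbsolutelyConvergentSeries

variable {s : ℝ} {ι : Type*} {F : ι → FC} {d : FC}

lemma hasSum_toL2_apply (hF : ∀ i, memHs s (F i)) (hsum : Summable fun i => hsNorm s (F i))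
    (k : ℤ) : HasSum (fun i => bessel s (F i) k) ((∑' i, (hF i).toL2 : lp (fun _ : ℤ => ℂ) 2) k) :=
  have hsum' : Summable fun i => (hF i).toL2 := .of_norm (by simpa only [norm_toL2] using hsum)
  hsum'.hasSum.mapL (lp.evalCLM ℂ (fun _ : ℤ => ℂ) 2 k)

lemma summable_apply_of_summable_hsNorm (hF : ∀ i, memHs s (F i))
    (hsum : Summable fun i => hsNorm s (F i)) (k : ℤ) : Summable fun i => F i k :=
  (summable_mul_left_iff (Complex.ofReal_ne_zero.2 (wt_pos (s / 2) k).ne')).1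
    (hasSum_toL2_apply hF hsum k).summable

lemma bessel_tsum (hF : ∀ i, memHs s (F i)) (hsum : Summable fun i => hsNorm s (F i)) :
    bessel s (fun k => ∑' i, F i k) = (∑' i, (hF i).toL2 : lp (fun _ : ℤ => ℂ) 2) :=
  funext fun k => tsum_mul_left.symm.trans (hasSum_toL2_apply hF hsum k).tsum_eq

lemma memHs_tsum (hF : ∀ i, memHs s (F i)) (hsum : Summable fun i => hsNorm s (F i)) :
    memHs s fun k => ∑' i, F i k := by
  rw [memHs_iff_memℓp, bessel_tsum hF hsum]
  exact lp.memℓp _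

lemma hasSum_toL2 (hF : ∀ i, memHs s (F i)) (hsum : Summable fun i => hsNorm s (F i)) :
    HasSum (fun i => (hF i).toL2) (memHs_tsum hF hsum).toL2 := by
  have hsum' : Summable fun i => (hF i).toL2 := .of_norm (by simpa only [norm_toL2] using hsum)
  convert hsum'.hasSum using 1
  exact Subtype.ext (bessel_tsum hF hsum)

lemma hsNorm_tsum_le (hF : ∀ i, memHs s (F i)) (hsum : Summable fun i => hsNorm s (F i)) :
    hsNorm s (fun k => ∑' i, F i k) ≤ ∑' i, hsNorm s (F i) := by
  rw [← norm_toL2 (memHs_tsum hF hsum), ← (hasSum_toL2 hF hsum).tsum_eq]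
  simp only [← fun i => norm_toL2 (hF i)] at hsum ⊢
  exact norm_tsum_le_tsum_norm hsum

lemma hasSum_hsInner_tsum_left (hF : ∀ i, memHs s (F i))
    (hsum : Summable fun i => hsNorm s (F i)) (hd : memHs s d) :
    HasSum (fun i => hsInner s (F i) d) (hsInner s (fun k => ∑' i, F i k) d) := by
  rw [hsInner_eq_re_inner (memHs_tsum hF hsum) hd]
  simp only [fun i => hsInner_eq_re_inner (hF i) hd]
  exact Complex.hasSum_re ((hasSum_toL2 hF hsum).mapL (innerSL ℂ hd.toL2))

lemma hasSum_hsNorm_tsum_sq (hF : ∀ i, memHs s (F i)) (hsum : Summable fun i => hsNorm s (F i)) :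
    HasSum (fun x : ι × ι => hsInner s (F x.1) (F x.2)) (hsNorm s (fun k => ∑' i, F i k) ^ 2) := by
  have hmem := memHs_tsum hF hsum
  have hprod : Summable fun x : ι × ι => hsInner s (F x.1) (F x.2) :=
    .of_norm_bounded (hsum.mul_of_nonneg hsum (fun _ => hsNorm_nonneg _ _)
      fun _ => hsNorm_nonneg _ _) fun x => abs_hsInner_le (hF x.1) (hF x.2)
  have hinner (i : ι) : ∑' j, hsInner s (F i) (F j) = hsInner s (F i) fun k => ∑' j, F j k := by
    rw [hsInner_comm, ← (hasSum_hsInner_tsum_left hF hsum (hF i)).tsum_eq]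
    exact tsum_congr fun j => hsInner_comm _ _ _
  convert hprod.hasSum using 1
  rw [hprod.tsum_prod, ← hsInner_self hmem, ← (hasSum_hsInner_tsum_left hF hsum hmem).tsum_eq]
  exact tsum_congr fun i => (hinner i).symm

end AbsolutelyConvergentSeries

/-! ### The weighted Wiener algebra -/

/-- The weighted Wiener space of functions with `∑ (1 + k²)^m |f̂(k)| < ∞`. -/
def memWiener (m : ℝ) (c : FC) : Prop := Summable fun k : ℤ => wt m k * ‖c k‖

/-- The norm `∑ (1 + k²)^m |f̂(k)|` of the weighted Wiener space. -/
def wienerNorm (m : ℝ) (c : FC) : ℝ := ∑' k : ℤ, wt m k * ‖c k‖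

section Wiener

variable {m n s : ℝ} {c : FC}

lemma wienerNorm_nonneg (m : ℝ) (c : FC) : 0 ≤ wienerNorm m c :=
  tsum_nonneg fun k => mul_nonneg (wt_pos m k).le (norm_nonneg _)

lemma memWiener.mono (hc : memWiener n c) (h : m ≤ n) : memWiener m c :=
  .of_nonneg_of_le (fun k => mul_nonneg (wt_pos m k).le (norm_nonneg _))
    (fun k => mul_le_mul_of_nonneg_right (wt_mono h k) (norm_nonneg _)) hc

lemma wienerNorm_mono (hc : memWiener n c) (h : m ≤ n) : wienerNorm m c ≤ wienerNorm n c :=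
  (hc.mono h).tsum_le_tsum (fun k => mul_le_mul_of_nonneg_right (wt_mono h k) (norm_nonneg _)) hc

lemma memWiener.D1 (hc : memWiener (m + 1 / 2) c) : memWiener m (D1 c) := by
  refine .of_nonneg_of_le (fun k => mul_nonneg (wt_pos m k).le (norm_nonneg _)) (fun k => ?_) hc
  have := abs_le_bracket_half (k : ℝ)
  have := (wt_pos m k).le
  rw [FC.D1, norm_mul, norm_mul, Complex.norm_I, one_mul, Complex.norm_intCast, wt_add, mul_assoc]
  gcongr
  assumption

lemma summable_wt_neg_one : Summable (wt (-1)) := by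
  refine .of_norm_bounded_eventually
    ((Real.summable_abs_int_rpow (b := 2) (by norm_num))) ?_
  filter_upwards [(Set.finite_singleton (0 : ℤ)).compl_mem_cofinite] with k hk
  have hk0 : 0 < |(k : ℝ)| := by simpa using hk
  rw [Real.norm_of_nonneg (wt_pos _ k).le, wt, Real.rpow_neg hk0.le, Real.rpow_neg (by positivity),
    Real.rpow_one, Real.rpow_two, sq_abs]
  exact inv_anti₀ (by rw [← sq_abs]; positivity) (by linarith)

/-- Cauchy–Schwarz against the summable weight `(1 + k²)^{-1}`. -/
lemma exists_wienerNorm_le : ∃ K > 0, ∀ {m s : ℝ} {c : FC}, 2 * m + 1 ≤ s → memHs s c →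
    memWiener m c ∧ wienerNorm m c ≤ K * hsNorm s c := by
  refine ⟨√(∑' k, wt (-1) k), Real.sqrt_pos.2 (summable_wt_neg_one.tsum_pos
    (fun k => (wt_pos _ k).le) 0 (wt_pos _ 0)), fun {m s c} hm hc => ?_⟩
  have hsq (k : ℤ) : (wt (-1 / 2) k) ^ (2 : ℝ) = wt (-1) k := by
    rw [Real.rpow_two, wt_eq_half_mul_half (-1), sq]
  have hsq' (k : ℤ) : (wt (s / 2) k * ‖c k‖) ^ (2 : ℝ) = wt s k * ‖c k‖ ^ 2 := by
    rw [Real.rpow_two, wt_eq_half_mul_half s]; ring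
  have hle (k : ℤ) : wt m k * ‖c k‖ ≤ wt (-1 / 2) k * (wt (s / 2) k * ‖c k‖) := by
    rw [← mul_assoc, ← wt_add]
    exact mul_le_mul_of_nonneg_right (wt_mono (by linarith) k) (norm_nonneg _)
  obtain ⟨hsum, hbound⟩ := Real.summable_and_inner_le_Lp_mul_Lq_tsum_of_nonneg .two_two
    (fun k => (wt_pos (-1 / 2) k).le)
    (fun k => mul_nonneg (wt_pos (s / 2) k).le (norm_nonneg (c k)))
    (by simpa only [hsq] using summable_wt_neg_one) (by simp only [hsq']; exact hc)
  simp only [hsq, hsq', ← Real.sqrt_eq_rpow] at hbound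
  have hmem : memWiener m c := .of_nonneg_of_le
    (fun k => mul_nonneg (wt_pos m k).le (norm_nonneg _)) hle hsum
  exact ⟨hmem, (hmem.tsum_le_tsum hle hsum).trans hbound⟩

end Wiener

/-! ### Multiplication and differentiation on Sobolev spaces -/

/-- Multiplication by the character `x ↦ exp (i p x)`, which shifts Fourier coefficients. -/
def modulate (p : ℤ) (f : FC) : FC := fun k => f (k - p)

section Product

variable {σ : ℝ} {c c' d d' : FC}

lemma wt_mul_norm_modulate_sq_le (hσ : 0 ≤ σ) (p k : ℤ) (d : FC) :
    wt σ k * ‖modulate p d k‖ ^ 2 ≤ 2 ^ σ * wt σ p * (wt σ (k - p) * ‖d (k - p)‖ ^ 2) := by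
  have peetre := bracket_le_mul_bracket_sub hσ (k : ℝ) p
  calc wt σ k * ‖d (k - p)‖ ^ 2
      ≤ 2 ^ σ * (wt σ p * wt σ (k - p)) * ‖d (k - p)‖ ^ 2 := by
        gcongr
        simpa [wt, bracket] using peetre
    _ = 2 ^ σ * wt σ p * (wt σ (k - p) * ‖d (k - p)‖ ^ 2) := by ring

lemma hasSum_hsNorm_sq_sub (hd : memHs σ d) (p : ℤ) :
    HasSum (fun k => wt σ (k - p) * ‖d (k - p)‖ ^ 2) (hsNorm σ d ^ 2) := by
  rw [hsNorm_sq]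
  exact (Equiv.subRight p).hasSum_iff (f := fun k => wt σ k * ‖d k‖ ^ 2) |>.2 hd.hasSum

lemma memHs.modulate (hσ : 0 ≤ σ) (hd : memHs σ d) (p : ℤ) : memHs σ (modulate p d) :=
  .of_nonneg_of_le (fun k => mul_nonneg (wt_pos σ k).le (sq_nonneg _))
    (fun k => wt_mul_norm_modulate_sq_le hσ p k d)
    ((hasSum_hsNorm_sq_sub hd p).summable.mul_left _)

lemma hsNorm_modulate_le (hσ : 0 ≤ σ) (hd : memHs σ d) (p : ℤ) :
    hsNorm σ (modulate p d) ≤ 2 ^ (σ / 2) * wt (σ / 2) p * hsNorm σ d := by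
  have hpow : ((2 : ℝ) ^ (σ / 2)) ^ 2 = 2 ^ σ := by
    rw [← Real.rpow_mul_natCast two_pos.le]
    simp
  have := wt_pos (σ / 2) p
  have := hsNorm_nonneg σ d
  refine le_of_sq_le_sq ?_ (by positivity)
  calc hsNorm σ (FC.modulate p d) ^ 2
      ≤ ∑' k, 2 ^ σ * wt σ p * (wt σ (k - p) * ‖d (k - p)‖ ^ 2) := by
        rw [hsNorm_sq]
        exact (hd.modulate hσ p).tsum_le_tsum (fun k => wt_mul_norm_modulate_sq_le hσ p k d)
          ((hasSum_hsNorm_sq_sub hd p).summable.mul_left _)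
    _ = (2 ^ (σ / 2) * wt (σ / 2) p * hsNorm σ d) ^ 2 := by
        rw [tsum_mul_left, (hasSum_hsNorm_sq_sub hd p).tsum_eq, mul_pow, mul_pow, hpow,
          sq (wt (σ / 2) p), ← wt_eq_half_mul_half]

lemma hsNorm_smul_modulate_le (hσ : 0 ≤ σ) (hd : memHs σ d) (c : FC) (p : ℤ) :
    hsNorm σ (c p • modulate p d) ≤ 2 ^ (σ / 2) * hsNorm σ d * (wt (σ / 2) p * ‖c p‖) := by
  rw [hsNorm_smul]
  linarith [mul_le_mul_of_nonneg_left (hsNorm_modulate_le hσ hd p) (norm_nonneg (c p))]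

lemma summable_hsNorm_smul_modulate (hσ : 0 ≤ σ) (hc : memWiener (σ / 2) c) (hd : memHs σ d) :
    Summable fun p => hsNorm σ (c p • modulate p d) :=
  .of_nonneg_of_le (fun _ => hsNorm_nonneg _ _) (hsNorm_smul_modulate_le hσ hd c) (hc.mul_left _)

lemma memHs_mul (hσ : 0 ≤ σ) (hc : memWiener (σ / 2) c) (hd : memHs σ d) : memHs σ (mul c d) :=
  memHs_tsum (fun p => (hd.modulate hσ p).smul (c p)) (summable_hsNorm_smul_modulate hσ hc hd)

lemma hsNorm_mul_le (hσ : 0 ≤ σ) (hc : memWiener (σ / 2) c) (hd : memHs σ d) :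
    hsNorm σ (mul c d) ≤ 2 ^ (σ / 2) * wienerNorm (σ / 2) c * hsNorm σ d := by
  have hsum := summable_hsNorm_smul_modulate hσ hc hd
  calc hsNorm σ (mul c d) ≤ ∑' p, hsNorm σ (c p • modulate p d) :=
        hsNorm_tsum_le (fun p => (hd.modulate hσ p).smul (c p)) hsum
    _ ≤ ∑' p, 2 ^ (σ / 2) * hsNorm σ d * (wt (σ / 2) p * ‖c p‖) :=
        hsum.tsum_le_tsum (hsNorm_smul_modulate_le hσ hd c) (hc.mul_left _)
    _ = 2 ^ (σ / 2) * wienerNorm (σ / 2) c * hsNorm σ d := by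
        rw [tsum_mul_left, wienerNorm]
        ring

lemma summable_mul_apply (hσ : 0 ≤ σ) (hc : memWiener (σ / 2) c) (hd : memHs σ d) (k : ℤ) :
    Summable fun p => c p * d (k - p) :=
  summable_apply_of_summable_hsNorm (fun p => (hd.modulate hσ p).smul (c p))
    (summable_hsNorm_smul_modulate hσ hc hd) k

protected lemma mul_comm (c d : FC) : mul c d = mul d c := by
  funext k
  rw [mul, mul, ← (Equiv.subLeft k).tsum_eq]
  exact tsum_congr fun p => by simp [mul_comm]

lemma mul_sub_right (hσ : 0 ≤ σ) (hc : memWiener (σ / 2) c) (hd : memHs σ d) (hd' : memHs σ d') :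
    mul c (d - d') = mul c d - mul c d' := by
  funext k
  simp only [mul, Pi.sub_apply, mul_sub]
  exact (summable_mul_apply hσ hc hd k).tsum_sub (summable_mul_apply hσ hc hd' k)

lemma mul_sub_left (hσ : 0 ≤ σ) (hc : memWiener (σ / 2) c) (hc' : memWiener (σ / 2) c')
    (hd : memHs σ d) : mul (c - c') d = mul c d - mul c' d := by
  funext k
  simp only [mul, Pi.sub_apply, sub_mul]
  exact (summable_mul_apply hσ hc hd k).tsum_sub (summable_mul_apply hσ hc' hd k)

end Product

section Derivative

variable {σ : ℝ} {d : FC}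

lemma D1_sub (c d : FC) : D1 (c - d) = D1 c - D1 d := funext fun _ => mul_sub _ _ _

lemma norm_D1_apply (d : FC) (k : ℤ) : ‖D1 d k‖ = |(k : ℝ)| * ‖d k‖ := by
  rw [D1, norm_mul, norm_mul, Complex.norm_I, one_mul, Complex.norm_intCast]

lemma wt_mul_norm_D1_sq_le (σ : ℝ) (d : FC) (k : ℤ) :
    wt σ k * ‖D1 d k‖ ^ 2 ≤ wt (σ + 1) k * ‖d k‖ ^ 2 := by
  rw [norm_D1_apply, mul_pow, sq_abs, ← mul_assoc, mul_comm (wt σ k)]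
  exact mul_le_mul_of_nonneg_right (sq_mul_bracket_le σ k) (sq_nonneg _)

lemma memHs.D1 (hd : memHs (σ + 1) d) : memHs σ (D1 d) :=
  .of_nonneg_of_le (fun k => mul_nonneg (wt_pos σ k).le (sq_nonneg _)) (wt_mul_norm_D1_sq_le σ d) hd

lemma hsNorm_D1_le (hd : memHs (σ + 1) d) : hsNorm σ (D1 d) ≤ hsNorm (σ + 1) d :=
  Real.sqrt_le_sqrt (hd.D1.tsum_le_tsum (wt_mul_norm_D1_sq_le σ d) hd)

end Derivative

section BilinearForm

variable {σ : ℝ} {c d : FC}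

lemma norm_bessel (s : ℝ) (c : FC) (k : ℤ) : ‖bessel s c k‖ = wt (s / 2) k * ‖c k‖ := by
  rw [bessel, mult, norm_mul, Complex.norm_real, Real.norm_of_nonneg (wt_pos _ _).le]

/-- Cauchy–Schwarz for a bilinear form concentrated on a single diagonal. -/
lemma abs_le_of_hasSum_diagonal {G : ℤ → ℝ} {a B : ℝ} {m : ℤ} (hB : 0 ≤ B) (hc : memHs σ c)
    (hd : memHs σ d) (hG : HasSum G a)
    (hle : ∀ k, |G k| ≤ B * (‖bessel σ c (k - m)‖ * ‖bessel σ d k‖)) :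
    |a| ≤ B * (hsNorm σ c * hsNorm σ d) := by
  have hsq (e : FC) (k : ℤ) : ‖bessel σ e k‖ ^ (2 : ℝ) = wt σ k * ‖e k‖ ^ 2 := by
    rw [Real.rpow_two, norm_bessel_sq]
  obtain ⟨hsum, hcs⟩ := Real.summable_and_inner_le_Lp_mul_Lq_tsum_of_nonneg .two_two
    (fun k => norm_nonneg (bessel σ c (k - m))) (fun k => norm_nonneg (bessel σ d k))
    (by simp only [hsq]; exact (hasSum_hsNorm_sq_sub hc m).summable)
    (by simp only [hsq]; exact hd)
  simp only [hsq, ← Real.sqrt_eq_rpow, (hasSum_hsNorm_sq_sub hc m).tsum_eq,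
    Real.sqrt_sq (hsNorm_nonneg σ c)] at hcs
  calc |a| ≤ ∑' k, B * (‖bessel σ c (k - m)‖ * ‖bessel σ d k‖) :=
        hG.norm_le_of_bounded (hsum.mul_left B).hasSum hle
    _ ≤ B * (hsNorm σ c * hsNorm σ d) := by
        rw [tsum_mul_left]
        exact mul_le_mul_of_nonneg_left hcs hB

end BilinearForm

/-! ### The convection terms -/

section Transport

variable {σ : ℝ} {u w : FC}

lemma hasSum_transportMode (hσ : 0 ≤ σ) (hw : memHs (σ + 1) w) (p : ℤ) :
    HasSum (fun k : ℤ => (k - p : ℝ) * wt σ k *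
        (Complex.I * u p * w (k - p) * (starRingEnd ℂ) (w k)).re)
      (hsInner σ (u p • modulate p (D1 w)) w) := by
  convert hasSum_hsInner ((hw.D1.modulate hσ p).smul (u p)) (hw.mono (by linarith)) using 2 with k
  rw [mul_comm _ (wt σ k), mul_assoc, ← Complex.re_ofReal_mul]
  simp only [Pi.smul_apply, smul_eq_mul, modulate, D1]
  push_cast
  congr 2
  ring

/-- Reality of `u` turns the `-p` mode, after the shift `k ↦ k - p`, into a multiple of the
`p` mode. -/
lemma hasSum_transportMode_neg (hσ : 0 ≤ σ) (hu : isReal u) (hw : memHs (σ + 1) w) (p : ℤ) :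
    HasSum (fun k : ℤ => -(k * wt σ (k - p) *
        (Complex.I * u p * w (k - p) * (starRingEnd ℂ) (w k)).re))
      (hsInner σ (u (-p) • modulate (-p) (D1 w)) w) := by
  convert (Equiv.subRight p).hasSum_iff.2 (hasSum_transportMode (u := u) hσ hw (-p)) using 2 with k
  simp only [Function.comp_apply, Equiv.subRight_apply, sub_neg_eq_add, sub_add_cancel, hu p]
  rw [← Complex.conj_re]
  simp only [map_mul, Complex.conj_I, Complex.conj_conj]
  rw [← mul_neg, ← Complex.neg_re]
  push_cast
  congr 2
  · ring
  · ring

lemma exists_abs_transportMode_add_le (hσ : 0 ≤ σ) : ∃ C > 0, ∀ u w : FC, isReal u →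
    memHs (σ + 1) w → ∀ p : ℤ, |hsInner σ (u p • modulate p (D1 w)) w +
      hsInner σ (u (-p) • modulate (-p) (D1 w)) w| ≤
        C * (wt ((σ + 1) / 2) p * ‖u p‖) * hsNorm σ w ^ 2 := by
  obtain ⟨C, hC, kernel_le⟩ := exists_transportKernel_le hσ
  refine ⟨C, hC, fun u w hu hw p => ?_⟩
  have hp := wt_pos ((σ + 1) / 2) p
  have hwσ : memHs σ w := hw.mono (by linarith)
  rw [sq]
  refine abs_le_of_hasSum_diagonal (m := p) (by positivity) hwσ hwσ
    ((hasSum_transportMode hσ hw p).add (hasSum_transportMode_neg hσ hu hw p)) fun k => ?_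
  have kernel := kernel_le k (k - p)
  rw [sub_sub_cancel] at kernel
  set Q := Complex.I * u p * w (k - p) * (starRingEnd ℂ) (w k) with hQ
  have norm_Q : |Q.re| ≤ ‖u p‖ * (‖w (k - p)‖ * ‖w k‖) := by
    refine (Complex.abs_re_le_norm Q).trans_eq ?_
    simp only [hQ, norm_mul, Complex.norm_I, RCLike.norm_conj]
    ring
  calc |(k - p) * wt σ k * Q.re + -(k * wt σ (k - p) * Q.re)|
      = |(k - p : ℝ) * bracket σ k - k * bracket σ (k - p)| * |Q.re| := by
        rw [← abs_mul]
        simp only [wt, bracket]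
        push_cast
        ring_nf
    _ ≤ C * (bracket ((σ + 1) / 2) p * (bracket (σ / 2) k * bracket (σ / 2) (k - p))) *
          (‖u p‖ * (‖w (k - p)‖ * ‖w k‖)) :=
        mul_le_mul kernel norm_Q (abs_nonneg _) ((abs_nonneg _).trans kernel)
    _ = C * (wt ((σ + 1) / 2) p * ‖u p‖) * (‖bessel σ w (k - p)‖ * ‖bessel σ w k‖) := by
        rw [norm_bessel, norm_bessel]
        simp only [wt, bracket]
        push_cast
        ring

lemma exists_abs_hsInner_transport_le (hσ : 0 ≤ σ) : ∃ C > 0, ∀ u w : FC, isReal u →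
    memWiener ((σ + 1) / 2) u → memHs (σ + 1) w →
    |hsInner σ (mul u (D1 w)) w| ≤ C * wienerNorm ((σ + 1) / 2) u * hsNorm σ w ^ 2 := by
  obtain ⟨C, hC, hmode⟩ := exists_abs_transportMode_add_le hσ
  refine ⟨C, hC, fun u w hu huW hw => ?_⟩
  have modes : HasSum (fun p => hsInner σ (u p • modulate p (D1 w)) w)
      (hsInner σ (mul u (D1 w)) w) :=
    hasSum_hsInner_tsum_left (fun p => (hw.D1.modulate hσ p).smul (u p))
      (summable_hsNorm_smul_modulate hσ (huW.mono (by linarith)) hw.D1) (hw.mono (by linarith))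
  have bound := (modes.add ((Equiv.neg ℤ).hasSum_iff.2 modes)).norm_le_of_bounded
    ((huW.hasSum.mul_left C).mul_right (hsNorm σ w ^ 2)) (hmode u w hu hw)
  rw [Real.norm_eq_abs, ← two_mul, abs_mul, abs_two] at bound
  rw [wienerNorm]
  linarith [abs_nonneg (hsInner σ (mul u (D1 w)) w)]

end Transport

section Convection

variable {σ : ℝ}

lemma exists_hsNorm_mul_D1_le (hσ : 0 ≤ σ) : ∃ C > 0, ∀ w z : FC, memHs σ w →
    memHs (σ + 2) z → hsNorm σ (mul w (D1 z)) ≤ C * hsNorm (σ + 2) z * hsNorm σ w := by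
  obtain ⟨K, hK, wiener_le⟩ := exists_wienerNorm_le
  refine ⟨2 ^ (σ / 2) * K, by positivity, fun w z hw hz => ?_⟩
  have hz' : memHs (σ + 1 + 1) z := hz.mono (by linarith)
  obtain ⟨hmem, hle⟩ := wiener_le (m := σ / 2) (s := σ + 1) (by linarith) hz'.D1
  have hD1 : hsNorm (σ + 1) (D1 z) ≤ hsNorm (σ + 2) z :=
    (hsNorm_D1_le hz').trans_eq (by ring_nf)
  have := hsNorm_nonneg σ w
  rw [FC.mul_comm]
  calc hsNorm σ (mul (D1 z) w) ≤ 2 ^ (σ / 2) * wienerNorm (σ / 2) (D1 z) * hsNorm σ w :=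
        hsNorm_mul_le hσ hmem hw
    _ ≤ 2 ^ (σ / 2) * (K * hsNorm (σ + 2) z) * hsNorm σ w := by
        gcongr
        exact hle.trans (by gcongr)
    _ = 2 ^ (σ / 2) * K * hsNorm (σ + 2) z * hsNorm σ w := by ring

lemma mul_D1_sub_mul_D1 {u v η ρ : FC} (hσ : 0 ≤ σ) (hu : memWiener (σ / 2) u)
    (hv : memWiener (σ / 2) v) (hη : memHs (σ + 1) η) (hρ : memHs (σ + 1) ρ) :
    mul u (D1 η) - mul v (D1 ρ) = mul u (D1 (η - ρ)) + mul (u - v) (D1 ρ) := by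
  rw [D1_sub, mul_sub_right hσ hu hη.D1 hρ.D1, mul_sub_left hσ hu hv hρ.D1]
  abel

lemma memHs_mul_D1 {u η : FC} (hσ : 0 ≤ σ) (hu : memHs (σ + 2) u) (hη : memHs (σ + 1) η) :
    memHs σ (mul u (D1 η)) := by
  obtain ⟨_, -, wiener_le⟩ := exists_wienerNorm_le
  exact memHs_mul hσ (wiener_le (by linarith) hu).1 hη.D1

lemma mul_sq_add_mul_mul_le {A B a b : ℝ} (hA : 0 ≤ A) (hB : 0 ≤ B) (U R : ℝ) (ha : 0 ≤ a)
    (hb : 0 ≤ b) :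
    A * U * b ^ 2 + B * R * a * b ≤ (A + B) * (1 + U ^ 2 + R ^ 2) * (a ^ 2 + b ^ 2) := by
  have hU : U * b ^ 2 ≤ (1 + U ^ 2 + R ^ 2) * (a ^ 2 + b ^ 2) :=
    mul_le_mul (by nlinarith [sq_nonneg (U - 1)]) (by nlinarith) (sq_nonneg b) (by positivity)
  have hR : R * (a * b) ≤ (1 + U ^ 2 + R ^ 2) * (a ^ 2 + b ^ 2) :=
    mul_le_mul (by nlinarith [sq_nonneg (R - 1)]) (by nlinarith [sq_nonneg (a - b)])
      (mul_nonneg ha hb) (by positivity)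
  linarith [mul_le_mul_of_nonneg_left hU hA, mul_le_mul_of_nonneg_left hR hB]

lemma exists_abs_hsInner_convection_sub_le (hσ : 0 ≤ σ) : ∃ C > 0, ∀ u v η ρ : FC, isReal u →
    memHs (σ + 2) u → memHs (σ + 2) v → memHs (σ + 1) η → memHs (σ + 2) ρ →
    |hsInner σ (mul u (D1 η) - mul v (D1 ρ)) (η - ρ)| ≤
      C * (1 + hsNorm (σ + 2) u ^ 2 + hsNorm (σ + 2) ρ ^ 2) *
        (hsNorm σ (u - v) ^ 2 + hsNorm σ (η - ρ) ^ 2) := by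
  obtain ⟨K, hK, wiener_le⟩ := exists_wienerNorm_le
  obtain ⟨A, hA, transport_le⟩ := exists_abs_hsInner_transport_le hσ
  obtain ⟨B, hB, product_le⟩ := exists_hsNorm_mul_D1_le hσ
  refine ⟨A * K + B, by positivity, fun u v η ρ hur hu hv hη hρ => ?_⟩
  have hρ' : memHs (σ + 1) ρ := hρ.mono (by linarith)
  have hηρ := hη.sub hρ'
  have huv : memHs σ (u - v) := (hu.sub hv).mono (by linarith)
  have hθ : memHs σ (η - ρ) := hηρ.mono (by linarith)
  obtain ⟨huW, hu_le⟩ := wiener_le (m := (σ + 1) / 2) (by linarith) hu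
  have hvW := (wiener_le (m := (σ + 1) / 2) (by linarith) hv).1
  have hprod := memHs_mul_D1 hσ (hu.sub hv) hρ'
  rw [mul_D1_sub_mul_D1 hσ (huW.mono (by linarith)) (hvW.mono (by linarith)) hη hρ',
    hsInner_add_left (memHs_mul_D1 hσ hu hηρ) hprod hθ]
  have transport := transport_le u (η - ρ) hur huW hηρ
  have product := (abs_hsInner_le hprod hθ).trans
    (mul_le_mul_of_nonneg_right (product_le (u - v) ρ huv hρ) (hsNorm_nonneg σ _))
  have := hsNorm_nonneg σ (η - ρ)
  calc |hsInner σ (mul u (D1 (η - ρ))) (η - ρ) + hsInner σ (mul (u - v) (D1 ρ)) (η - ρ)|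
      ≤ A * wienerNorm ((σ + 1) / 2) u * hsNorm σ (η - ρ) ^ 2 +
          B * hsNorm (σ + 2) ρ * hsNorm σ (u - v) * hsNorm σ (η - ρ) :=
        (abs_add_le _ _).trans (add_le_add transport product)
    _ ≤ A * (K * hsNorm (σ + 2) u) * hsNorm σ (η - ρ) ^ 2 +
          B * hsNorm (σ + 2) ρ * hsNorm σ (u - v) * hsNorm σ (η - ρ) := by gcongr
    _ ≤ _ := by
        rw [← mul_assoc]
        exact mul_sq_add_mul_mul_le (by positivity) hB.le _ _ (hsNorm_nonneg _ _) this

end Convection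

/-! ### Cancellation in the noise terms -/

/-- The contribution `∂ₓ (ξ̂(p) exp (i p x) f)` of the `p`-th Fourier mode of `ξ` to `𝓛_ξ f`. -/
def lieMode (ξ : FC) (p : ℤ) (f : FC) : FC := ξ p • D1 (modulate p f)

section Lie

variable {σ : ℝ} {ξ f g : FC}

lemma memHs.lieMode (hσ : 0 ≤ σ) (hf : memHs (σ + 1) f) (ξ : FC) (p : ℤ) :
    memHs σ (lieMode ξ p f) :=
  ((hf.modulate (by linarith) p).D1).smul _

lemma hsNorm_lieMode_le (hσ : 0 ≤ σ) (hf : memHs (σ + 1) f) (ξ : FC) (p : ℤ) :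
    hsNorm σ (lieMode ξ p f) ≤
      2 ^ ((σ + 1) / 2) * hsNorm (σ + 1) f * (wt ((σ + 1) / 2) p * ‖ξ p‖) := by
  have hσ' : 0 ≤ σ + 1 := by linarith
  refine le_trans ?_ (hsNorm_smul_modulate_le hσ' hf ξ p)
  rw [lieMode, hsNorm_smul, hsNorm_smul]
  exact mul_le_mul_of_nonneg_left (hsNorm_D1_le (hf.modulate hσ' p)) (norm_nonneg _)

lemma summable_hsNorm_lieMode (hσ : 0 ≤ σ) (hξ : memWiener ((σ + 1) / 2) ξ)
    (hf : memHs (σ + 1) f) : Summable fun p => hsNorm σ (lieMode ξ p f) :=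
  .of_nonneg_of_le (fun _ => hsNorm_nonneg _ _) (hsNorm_lieMode_le hσ hf ξ) (hξ.mul_left _)

lemma tsum_lieMode (ξ f : FC) : (fun k => ∑' p, lieMode ξ p f k) = D1 (mul ξ f) := by
  funext k
  rw [D1, mul, ← tsum_mul_left]
  exact tsum_congr fun p => mul_left_comm _ _ _

lemma lie_eq_D1_mul (hσ : 0 ≤ σ) (hξ : memWiener ((σ + 1) / 2) ξ) (hf : memHs (σ + 1) f) :
    lie ξ f = D1 (mul ξ f) := by
  rw [add_div] at hξ
  funext k
  rw [lie, Pi.add_apply, mul, mul,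
    ← (summable_mul_apply hσ (hξ.mono (by linarith)) hf.D1 k).tsum_add
      (summable_mul_apply hσ hξ.D1 (hf.mono (by linarith)) k), D1, mul, ← tsum_mul_left]
  refine tsum_congr fun p => ?_
  rw [D1, D1]
  push_cast
  ring

lemma lie_eq_tsum_lieMode (hσ : 0 ≤ σ) (hξ : memWiener ((σ + 1) / 2) ξ) (hf : memHs (σ + 1) f) :
    lie ξ f = fun k => ∑' p, lieMode ξ p f k := by
  rw [tsum_lieMode, lie_eq_D1_mul hσ hξ hf]

lemma memHs_lie (hσ : 0 ≤ σ) (hξ : memWiener ((σ + 1) / 2) ξ) (hf : memHs (σ + 1) f) :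
    memHs σ (lie ξ f) := by
  rw [lie_eq_D1_mul hσ hξ hf]
  exact (memHs_mul (by linarith) hξ hf).D1

lemma hsNorm_lie_le (hσ : 0 ≤ σ) (hξ : memWiener ((σ + 1) / 2) ξ) (hf : memHs (σ + 1) f) :
    hsNorm σ (lie ξ f) ≤ 2 ^ ((σ + 1) / 2) * wienerNorm ((σ + 1) / 2) ξ * hsNorm (σ + 1) f := by
  have hσ' : 0 ≤ σ + 1 := by linarith
  rw [lie_eq_D1_mul hσ hξ hf]
  exact (hsNorm_D1_le (memHs_mul hσ' hξ hf)).trans (hsNorm_mul_le hσ' hξ hf)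

lemma lie_sub (hσ : 0 ≤ σ) (hξ : memWiener ((σ + 1) / 2) ξ) (hf : memHs (σ + 1) f)
    (hg : memHs (σ + 1) g) : lie ξ (f - g) = lie ξ f - lie ξ g := by
  rw [lie_eq_D1_mul hσ hξ (hf.sub hg), mul_sub_right (by linarith) hξ hf hg, D1_sub,
    lie_eq_D1_mul hσ hξ hf, lie_eq_D1_mul hσ hξ hg]

end Lie

section LieSquared

variable {σ : ℝ} {ξ f g : FC}

lemma memHs_lie_of_add_two (hσ : 0 ≤ σ) (hξ : memWiener ((σ + 2) / 2) ξ) (hf : memHs (σ + 2) f) :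
    memHs (σ + 1) (lie ξ f) :=
  memHs_lie (by linarith) (hξ.mono (by linarith)) (hf.mono (by linarith))

lemma memHs_lie2 (hσ : 0 ≤ σ) (hξ : memWiener ((σ + 2) / 2) ξ) (hf : memHs (σ + 2) f) :
    memHs σ (lie2 ξ f) :=
  memHs_lie hσ (hξ.mono (by linarith)) (memHs_lie_of_add_two hσ hξ hf)

lemma lie2_sub (hσ : 0 ≤ σ) (hξ : memWiener ((σ + 2) / 2) ξ) (hf : memHs (σ + 2) f)
    (hg : memHs (σ + 2) g) : lie2 ξ (f - g) = lie2 ξ f - lie2 ξ g := by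
  have hξ' : memWiener ((σ + 1) / 2) ξ := hξ.mono (by linarith)
  rw [lie2, lie_sub hσ hξ' (hf.mono (by linarith)) (hg.mono (by linarith)),
    lie_sub hσ hξ' (memHs_lie_of_add_two hσ hξ hf) (memHs_lie_of_add_two hσ hξ hg), lie2, lie2]

lemma hsNorm_lie2_le (hσ : 0 ≤ σ) (hξ : memWiener ((σ + 2) / 2) ξ) (hf : memHs (σ + 2) f) :
    hsNorm σ (lie2 ξ f) ≤
      2 ^ ((σ + 1) / 2) * 2 ^ ((σ + 2) / 2) * wienerNorm ((σ + 2) / 2) ξ ^ 2 *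
        hsNorm (σ + 2) f := by
  have hmem := memHs_lie_of_add_two hσ hξ hf
  have hf' : memHs (σ + 1 + 1) f := hf.mono (by linarith)
  have hξ' : memWiener ((σ + 1 + 1) / 2) ξ := hξ.mono (by linarith)
  have h := hsNorm_lie_le (by linarith) hξ' hf'
  rw [show σ + 1 + 1 = σ + 2 by ring] at h
  have := wienerNorm_nonneg ((σ + 2) / 2) ξ
  have := hsNorm_nonneg (σ + 1) (lie ξ f)
  calc hsNorm σ (lie2 ξ f)
      ≤ 2 ^ ((σ + 1) / 2) * wienerNorm ((σ + 1) / 2) ξ * hsNorm (σ + 1) (lie ξ f) :=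
        hsNorm_lie_le hσ (hξ.mono (by linarith)) hmem
    _ ≤ 2 ^ ((σ + 1) / 2) * wienerNorm ((σ + 2) / 2) ξ *
          (2 ^ ((σ + 2) / 2) * wienerNorm ((σ + 2) / 2) ξ * hsNorm (σ + 2) f) := by
        gcongr
        exact wienerNorm_mono hξ (by linarith)
    _ = _ := by ring

lemma memHs_lieMode_lieMode (hσ : 0 ≤ σ) (hf : memHs (σ + 2) f) (ξ : FC) (p q : ℤ) :
    memHs σ (lieMode ξ p (lieMode ξ q f)) :=
  memHs.lieMode hσ (memHs.lieMode (by linarith) (hf.mono (by linarith)) ξ q) ξ p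

lemma summable_hsNorm_lieMode_lieMode (hσ : 0 ≤ σ) (hξ : memWiener ((σ + 2) / 2) ξ)
    (hf : memHs (σ + 2) f) :
    Summable fun x : ℤ × ℤ => hsNorm σ (lieMode ξ x.1 (lieMode ξ x.2 f)) := by
  have hσ' : 0 ≤ σ + 1 := by linarith
  have hf' : memHs (σ + 1 + 1) f := hf.mono (by linarith)
  have hξ₁ : memWiener ((σ + 1) / 2) ξ := hξ.mono (by linarith)
  have hξ₂ := summable_hsNorm_lieMode hσ' (hξ.mono (by linarith)) hf'
  refine .of_nonneg_of_le (fun _ => hsNorm_nonneg _ _)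
    (fun x => hsNorm_lieMode_le hσ (hf'.lieMode hσ' ξ x.2) ξ x.1) ?_
  simp only [mul_assoc, mul_comm (hsNorm _ _)]
  exact ((hξ₁.mul_of_nonneg hξ₂ (fun p => mul_nonneg (wt_pos _ p).le (norm_nonneg _))
    fun _ => hsNorm_nonneg _ _).congr fun x => mul_assoc _ _ _).mul_left _

lemma lie2_eq_tsum_lieMode (hσ : 0 ≤ σ) (hξ : memWiener ((σ + 2) / 2) ξ) (hf : memHs (σ + 2) f) :
    lie2 ξ f = fun k => ∑' x : ℤ × ℤ, lieMode ξ x.1 (lieMode ξ x.2 f) k := by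
  have hσ' : 0 ≤ σ + 1 := by linarith
  funext k
  have hsum := summable_apply_of_summable_hsNorm
    (fun x : ℤ × ℤ => memHs_lieMode_lieMode hσ hf ξ x.1 x.2)
    (summable_hsNorm_lieMode_lieMode hσ hξ hf) k
  rw [hsum.tsum_prod, lie2,
    lie_eq_tsum_lieMode hσ (hξ.mono (by linarith)) (memHs_lie_of_add_two hσ hξ hf),
    lie_eq_tsum_lieMode hσ' (hξ.mono (by linarith)) (hf.mono (by linarith))]
  exact tsum_congr fun p => by
    simp only [lieMode, Pi.smul_apply, smul_eq_mul, D1, modulate, tsum_mul_left]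

end LieSquared

/-- The quartic expression `Re (ξ̂(p) ξ̂(q) f̂(k-p-q) conj f̂(k))` through which every term of
`(𝓛_ξ² f, f) + ‖𝓛_ξ f‖²` depends on `ξ` and `f`. -/
def quartic (ξ f : FC) (p q k : ℤ) : ℝ :=
  (ξ p * ξ q * f (k - p - q) * (starRingEnd ℂ) (f k)).re

/-- The part of `4 ((𝓛_ξ² f, f) + ‖𝓛_ξ f‖²)` that comes from a pair of modes of `ξ`, symmetrized
under exchanging the two modes and, for the first term, conjugating them. -/
def symmetrizedNoise (σ : ℝ) (ξ f : FC) (p q : ℤ) : ℝ :=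
  2 * (hsInner σ (lieMode ξ p f) (lieMode ξ (-q) f) +
      hsInner σ (lieMode ξ q f) (lieMode ξ (-p) f)) +
    (hsInner σ (lieMode ξ p (lieMode ξ q f)) f + hsInner σ (lieMode ξ q (lieMode ξ p f)) f +
      hsInner σ (lieMode ξ (-p) (lieMode ξ (-q) f)) f +
      hsInner σ (lieMode ξ (-q) (lieMode ξ (-p) f)) f)

section Noise

variable {σ : ℝ} {ξ f : FC}

lemma quartic_swap (ξ f : FC) (p q k : ℤ) : quartic ξ f q p k = quartic ξ f p q k := by
  rw [quartic, quartic, mul_comm (ξ q), sub_right_comm]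

lemma abs_quartic_le (ξ f : FC) (p q k : ℤ) :
    |quartic ξ f p q k| ≤ ‖ξ p‖ * ‖ξ q‖ * (‖f (k - p - q)‖ * ‖f k‖) := by
  refine (Complex.abs_re_le_norm _).trans_eq ?_
  simp only [norm_mul, RCLike.norm_conj, mul_assoc]

lemma quartic_neg (hξ : isReal ξ) (p q k : ℤ) :
    quartic ξ f (-q) (-p) (k - p - q) = quartic ξ f p q k := by
  rw [quartic, ← Complex.conj_re, quartic, hξ p, hξ q]
  simp only [map_mul, Complex.conj_conj]
  ring_nf

lemma hasSum_lieMode_lieMode (hσ : 0 ≤ σ) (hf : memHs (σ + 2) f) (ξ : FC) (p q : ℤ) :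
    HasSum (fun k : ℤ => -(k * (k - p) * wt σ k * quartic ξ f p q k))
      (hsInner σ (lieMode ξ p (lieMode ξ q f)) f) := by
  convert hasSum_hsInner (memHs_lieMode_lieMode hσ hf ξ p q) (hf.mono (by linarith)) using 2 with k
  have symbol : lieMode ξ p (lieMode ξ q f) k * (starRingEnd ℂ) (f k) =
      ((-(k * (k - p)) : ℝ) : ℂ) * (ξ p * ξ q * f (k - p - q) * (starRingEnd ℂ) (f k)) := by
    simp only [lieMode, Pi.smul_apply, smul_eq_mul, modulate, D1]
    push_cast
    linear_combination
      (k * (k - p) * (ξ p * ξ q * f (k - p - q) * (starRingEnd ℂ) (f k))) * Complex.I_sq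
  rw [symbol, Complex.re_ofReal_mul, quartic]
  ring

lemma hasSum_lieMode_lieMode_neg (hσ : 0 ≤ σ) (hξ : isReal ξ) (hf : memHs (σ + 2) f) (p q : ℤ) :
    HasSum (fun k : ℤ => -((k - p - q) * (k - p) * wt σ (k - p - q) * quartic ξ f p q k))
      (hsInner σ (lieMode ξ (-q) (lieMode ξ (-p) f)) f) := by
  convert (Equiv.subRight (p + q)).hasSum_iff.2
    (hasSum_lieMode_lieMode hσ hf ξ (-q) (-p)) using 2 with k
  simp only [Function.comp_apply, Equiv.subRight_apply, ← sub_sub, quartic_neg hξ]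
  push_cast
  ring

lemma hasSum_lieMode_neg (hσ : 0 ≤ σ) (hξ : isReal ξ) (hf : memHs (σ + 1) f) (p q : ℤ) :
    HasSum (fun k : ℤ => (k - q) ^ 2 * wt σ (k - q) * quartic ξ f p q k)
      (hsInner σ (lieMode ξ p f) (lieMode ξ (-q) f)) := by
  convert (Equiv.subRight q).hasSum_iff.2
    (hasSum_hsInner (hf.lieMode hσ ξ p) (hf.lieMode hσ ξ (-q))) using 2 with k
  simp only [Function.comp_apply, Equiv.subRight_apply]
  have symbol : lieMode ξ p f (k - q) * (starRingEnd ℂ) (lieMode ξ (-q) f (k - q)) =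
      (((k - q) ^ 2 : ℝ) : ℂ) * (ξ p * ξ q * f (k - p - q) * (starRingEnd ℂ) (f k)) := by
    simp only [lieMode, Pi.smul_apply, smul_eq_mul, modulate, D1, map_mul, Complex.conj_I,
      hξ q, Complex.conj_conj, map_intCast, sub_neg_eq_add, sub_add_cancel, sub_right_comm k q p]
    push_cast
    linear_combination
      (-((k - q) ^ 2) * (ξ p * ξ q * f (k - p - q) * (starRingEnd ℂ) (f k))) * Complex.I_sq
  rw [symbol, Complex.re_ofReal_mul, quartic]
  ring

lemma hasSum_symmetrizedNoise (hσ : 0 ≤ σ) (hξ : isReal ξ) (hf : memHs (σ + 2) f) (p q : ℤ) :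
    HasSum (fun k : ℤ => noiseKernel σ k p q * quartic ξ f p q k)
      (symmetrizedNoise σ ξ f p q) := by
  have hf' : memHs (σ + 1) f := hf.mono (by linarith)
  have squares := (hasSum_lieMode_neg hσ hξ hf' p q).add (hasSum_lieMode_neg hσ hξ hf' q p)
  have drifts := (((hasSum_lieMode_lieMode hσ hf ξ p q).add
    (hasSum_lieMode_lieMode hσ hf ξ q p)).add (hasSum_lieMode_lieMode_neg hσ hξ hf q p)).add
      (hasSum_lieMode_lieMode_neg hσ hξ hf p q)
  refine ((squares.mul_left 2).add drifts).congr_fun fun k => ?_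
  rw [quartic_swap ξ f p q, noiseKernel, sub_right_comm k q p]
  simp only [wt, bracket]
  push_cast
  ring

lemma exists_abs_symmetrizedNoise_le (hσ : 0 ≤ σ) : ∃ C > 0, ∀ ξ f : FC, isReal ξ →
    memHs (σ + 2) f → ∀ p q : ℤ, |symmetrizedNoise σ ξ f p q| ≤
      C * (wt (σ + 1) p * ‖ξ p‖ * (wt (σ + 1) q * ‖ξ q‖)) * hsNorm σ f ^ 2 := by
  obtain ⟨C, hC, kernel_le⟩ := exists_noiseKernel_le hσ
  refine ⟨C, hC, fun ξ f hξ hf p q => ?_⟩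
  have hp := wt_pos (σ + 1) p
  have hq := wt_pos (σ + 1) q
  have hfσ : memHs σ f := hf.mono (by linarith)
  rw [sq]
  refine abs_le_of_hasSum_diagonal (m := p + q) (by positivity) hfσ hfσ
    (hasSum_symmetrizedNoise hσ hξ hf p q) fun k => ?_
  have kernel := kernel_le k p q
  rw [abs_mul, norm_bessel, norm_bessel, ← sub_sub]
  calc |noiseKernel σ k p q| * |quartic ξ f p q k|
      ≤ C * (bracket (σ + 1) p * bracket (σ + 1) q *
            (bracket (σ / 2) k * bracket (σ / 2) (k - p - q))) *
          (‖ξ p‖ * ‖ξ q‖ * (‖f (k - p - q)‖ * ‖f k‖)) :=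
        mul_le_mul kernel (abs_quartic_le ξ f p q k) (abs_nonneg _) ((abs_nonneg _).trans kernel)
    _ = _ := by
        simp only [wt, bracket]
        push_cast
        ring

lemma hasSum_symmetrizedNoise_prod (hσ : 0 ≤ σ) (hξ : memWiener ((σ + 2) / 2) ξ)
    (hf : memHs (σ + 2) f) :
    HasSum (fun x : ℤ × ℤ => symmetrizedNoise σ ξ f x.1 x.2)
      (4 * (hsInner σ (lie2 ξ f) f + hsNorm σ (lie ξ f) ^ 2)) := by
  have hf' : memHs (σ + 1) f := hf.mono (by linarith)
  have hξ' : memWiener ((σ + 1) / 2) ξ := hξ.mono (by linarith)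
  let swap := Equiv.prodComm ℤ ℤ
  let negBoth := Equiv.neg (ℤ × ℤ)
  let negSnd := (Equiv.refl ℤ).prodCongr (Equiv.neg ℤ)
  have square := hasSum_hsNorm_tsum_sq (fun p => hf'.lieMode hσ ξ p)
    (summable_hsNorm_lieMode hσ hξ' hf')
  have drift := hasSum_hsInner_tsum_left (d := f)
    (fun x : ℤ × ℤ => memHs_lieMode_lieMode hσ hf ξ x.1 x.2)
    (summable_hsNorm_lieMode_lieMode hσ hξ hf) (hf.mono (by linarith))
  rw [← lie_eq_tsum_lieMode hσ hξ' hf'] at square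
  rw [← lie2_eq_tsum_lieMode hσ hξ hf] at drift
  have squares := (negSnd.hasSum_iff.2 square).add ((swap.trans negSnd).hasSum_iff.2 square)
  have drifts := ((drift.add (swap.hasSum_iff.2 drift)).add (negBoth.hasSum_iff.2 drift)).add
    ((swap.trans negBoth).hasSum_iff.2 drift)
  have expand (a b : ℝ) : 4 * (a + b) = 2 * (b + b) + (a + a + a + a) := by ring
  rw [expand]
  exact (squares.mul_left 2).add drifts

lemma exists_hsInner_lie2_add_le (hσ : 0 ≤ σ) : ∃ C > 0, ∀ ξ f : FC, isReal ξ →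
    memWiener (σ + 1) ξ → memHs (σ + 2) f →
    hsInner σ (lie2 ξ f) f + hsNorm σ (lie ξ f) ^ 2 ≤
      C * wienerNorm (σ + 1) ξ ^ 2 * hsNorm σ f ^ 2 := by
  obtain ⟨C, hC, pair_le⟩ := exists_abs_symmetrizedNoise_le hσ
  refine ⟨C / 4, by positivity, fun ξ f hξ hξW hf => ?_⟩
  have nonneg (p : ℤ) : 0 ≤ wt (σ + 1) p * ‖ξ p‖ := mul_nonneg (wt_pos _ p).le (norm_nonneg _)
  have weights := hξW.hasSum.mul hξW.hasSum (hξW.mul_of_nonneg hξW nonneg nonneg)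
  have bound := (hasSum_symmetrizedNoise_prod hσ (hξW.mono (by linarith)) hf).norm_le_of_bounded
    ((weights.mul_left C).mul_right (hsNorm σ f ^ 2)) fun x => pair_le ξ f hξ hf x.1 x.2
  rw [← wienerNorm, ← sq] at bound
  linarith [le_of_abs_le bound]

end Noise

/-- Square summability of a sequence of noise coefficients in the weighted Wiener algebra
`A^m`: each `ξ n` lies in `A^m` and `Σ_n ‖ξ n‖²_{A^m}` converges. -/
structure SqSummableWiener (m : ℝ) (ξ : ℕ → FC) : Prop where
  mem : ∀ n, memWiener m (ξ n)
  summable_sq : Summable fun n => wienerNorm m (ξ n) ^ 2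

section NoiseSum

variable {m n σ : ℝ} {ξ : ℕ → FC} {f g : FC}

lemma SqSummableWiener.mono (hξ : SqSummableWiener n ξ) (h : m ≤ n) : SqSummableWiener m ξ where
  mem i := (hξ.mem i).mono h
  summable_sq := hξ.summable_sq.of_nonneg_of_le (fun _ => sq_nonneg _) fun i =>
    pow_le_pow_left₀ (wienerNorm_nonneg _ _) (wienerNorm_mono (hξ.mem i) h) 2

lemma summable_hsNorm_lie2 (hσ : 0 ≤ σ) (hξ : SqSummableWiener ((σ + 2) / 2) ξ)
    (hf : memHs (σ + 2) f) : Summable fun i => hsNorm σ (lie2 (ξ i) f) :=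
  ((hξ.summable_sq.mul_left _).mul_right _).of_nonneg_of_le (fun _ => hsNorm_nonneg _ _)
    fun i => hsNorm_lie2_le hσ (hξ.mem i) hf

lemma memHs_tsumFC_lie2 (hσ : 0 ≤ σ) (hξ : SqSummableWiener ((σ + 2) / 2) ξ)
    (hf : memHs (σ + 2) f) : memHs σ (tsumFC fun i => lie2 (ξ i) f) :=
  memHs_tsum (fun i => memHs_lie2 hσ (hξ.mem i) hf) (summable_hsNorm_lie2 hσ hξ hf)

lemma tsumFC_lie2_sub (hσ : 0 ≤ σ) (hξ : SqSummableWiener ((σ + 2) / 2) ξ)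
    (hf : memHs (σ + 2) f) (hg : memHs (σ + 2) g) :
    tsumFC (fun i => lie2 (ξ i) (f - g)) =
      tsumFC (fun i => lie2 (ξ i) f) - tsumFC fun i => lie2 (ξ i) g := by
  have summable_apply {h : FC} (hh : memHs (σ + 2) h) (k : ℤ) :
      Summable fun i => lie2 (ξ i) h k :=
    summable_apply_of_summable_hsNorm (fun i => memHs_lie2 hσ (hξ.mem i) hh)
      (summable_hsNorm_lie2 hσ hξ hh) k
  funext k
  simp only [tsumFC, fun i => lie2_sub hσ (hξ.mem i) hf hg, Pi.sub_apply]
  exact (summable_apply hf k).tsum_sub (summable_apply hg k)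

lemma summable_hsNorm_lie_sq (hσ : 0 ≤ σ) (hξ : SqSummableWiener ((σ + 1) / 2) ξ)
    (hf : memHs (σ + 1) f) : Summable fun i => hsNorm σ (lie (ξ i) f) ^ 2 := by
  refine ((hξ.summable_sq.mul_left ((2 ^ ((σ + 1) / 2)) ^ 2)).mul_right
    (hsNorm (σ + 1) f ^ 2)).of_nonneg_of_le (fun _ => sq_nonneg _) fun i => ?_
  rw [← mul_pow, ← mul_pow]
  exact pow_le_pow_left₀ (hsNorm_nonneg _ _) (hsNorm_lie_le hσ (hξ.mem i) hf) 2

lemma exists_hsInner_tsumFC_lie2_add_le (hσ : 0 ≤ σ) (hξ : SqSummableWiener (σ + 1) ξ)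
    (hξreal : ∀ i, isReal (ξ i)) : ∃ C > 0, ∀ f : FC, memHs (σ + 2) f →
    hsInner σ (tsumFC fun i => lie2 (ξ i) f) f + ∑' i, hsNorm σ (lie (ξ i) f) ^ 2 ≤
      C * hsNorm σ f ^ 2 := by
  obtain ⟨C, hC, noise_le⟩ := exists_hsInner_lie2_add_le hσ
  have : 0 ≤ ∑' i, wienerNorm (σ + 1) (ξ i) ^ 2 := tsum_nonneg fun _ => sq_nonneg _
  refine ⟨C * (∑' i, wienerNorm (σ + 1) (ξ i) ^ 2) + 1, by positivity, fun f hf => ?_⟩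
  have hξ' : SqSummableWiener ((σ + 2) / 2) ξ := hξ.mono (by linarith)
  have drift : HasSum _ (hsInner σ (tsumFC fun i => lie2 (ξ i) f) f) :=
    hasSum_hsInner_tsum_left (fun i => memHs_lie2 hσ (hξ'.mem i) hf)
      (summable_hsNorm_lie2 hσ hξ' hf) (hf.mono (by linarith))
  have squares := summable_hsNorm_lie_sq hσ (hξ.mono (by linarith)) (hf.mono (by linarith))
  have bound := hasSum_le (fun i => noise_le (ξ i) f (hξreal i) (hξ.mem i) hf)
    (drift.add squares.hasSum) ((hξ.summable_sq.hasSum.mul_left C).mul_right (hsNorm σ f ^ 2))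
  linarith [sq_nonneg (hsNorm σ f)]

end NoiseSum

/-! ### The two-component Camassa–Holm system -/

section Helmholtz

variable {s : ℝ} {c : FC}

lemma helm_sub (c d : FC) : helm (c - d) = helm c - helm d := funext fun _ => mul_sub _ _ _

lemma helmInv_sub (c d : FC) : helmInv (c - d) = helmInv c - helmInv d :=
  funext fun _ => mul_sub _ _ _

lemma wt_add_two (s : ℝ) (k : ℤ) : wt (s + 2) k = wt s k * (1 + (k : ℝ) ^ 2) ^ 2 := by
  rw [wt_add, wt, wt, Real.rpow_two]

lemma wt_mul_norm_helm_sq (s : ℝ) (c : FC) (k : ℤ) :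
    wt s k * ‖helm c k‖ ^ 2 = wt (s + 2) k * ‖c k‖ ^ 2 := by
  rw [helm, mult, norm_mul, mul_pow, Complex.norm_real, Real.norm_eq_abs, sq_abs, wt_add_two,
    mul_assoc]

lemma helm_helmInv (c : FC) : helm (helmInv c) = c := by
  funext k
  have : (1 + (k : ℂ) ^ 2) ≠ 0 := by exact_mod_cast (by positivity : (1 + (k : ℝ) ^ 2) ≠ 0)
  simp only [helm, helmInv, mult]
  push_cast
  field_simp

lemma memHs_helm : memHs s (helm c) ↔ memHs (s + 2) c := by
  simp only [memHs, wt_mul_norm_helm_sq]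

lemma hsNorm_helm (s : ℝ) (c : FC) : hsNorm s (helm c) = hsNorm (s + 2) c := by
  simp only [hsNorm, wt_mul_norm_helm_sq]

lemma memHs.helmInv (hc : memHs s c) : memHs (s + 2) (helmInv c) :=
  memHs_helm.1 <| by rwa [helm_helmInv]

lemma hsNorm_helmInv (s : ℝ) (c : FC) : hsNorm (s + 2) (helmInv c) = hsNorm s c := by
  rw [← hsNorm_helm, helm_helmInv]

lemma hsInner_helm_right (s : ℝ) (c d : FC) :
    hsInner s c (helm d) = hsInner (s + 2) (helmInv c) d := by
  have symbol (k : ℤ) : (wt s k : ℂ) * (c k * (starRingEnd ℂ) (helm d k)) =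
      (wt (s + 2) k : ℂ) * (helmInv c k * (starRingEnd ℂ) (d k)) := by
    nth_rw 1 [← helm_helmInv c]
    simp only [helm, mult, wt_add_two, map_mul, Complex.conj_ofReal]
    push_cast
    ring
  simp only [hsInner, symbol]

end Helmholtz

section CamassaHolm

variable {σ : ℝ} {ξ : ℕ → FC} {u v η ρ : FC} {k : ℕ}

lemma memHs.real_smul {s : ℝ} {c : FC} (a : ℝ) (hc : memHs s c) : memHs s (a • c) := by
  simpa only [Complex.coe_smul] using hc.smul (a : ℂ)

lemma hsInner_real_smul (s a : ℝ) (c d : FC) : hsInner s (a • c) d = a * hsInner s c d := by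
  simp only [hsInner, Pi.smul_apply, Complex.real_smul, mul_assoc, mul_left_comm _ (a : ℂ)]
  rw [tsum_mul_left, Complex.re_ofReal_mul]

lemma two_mul_hsInner_neg_add_half_smul {N Z w : FC} (hN : memHs σ N) (hZ : memHs σ Z)
    (hw : memHs σ w) :
    2 * hsInner σ (-N + (1 / 2 : ℝ) • Z) w = -(2 * hsInner σ N w) + hsInner σ Z w := by
  rw [hsInner_add_left hN.neg (hZ.real_smul _) hw, ← neg_one_smul ℝ N, hsInner_real_smul,
    hsInner_real_smul]
  ring

lemma two_mul_hsInner_drift_add_le {N Z w : FC} {C₁ C₂ P Q S : ℝ} (hN : memHs σ N)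
    (hZ : memHs σ Z) (hw : memHs σ w) (hC₂ : 0 ≤ C₂) (hP : 1 ≤ P) (hQ : hsNorm σ w ^ 2 ≤ Q)
    (convection : |hsInner σ N w| ≤ C₁ * P * Q)
    (noise : hsInner σ Z w + S ≤ C₂ * hsNorm σ w ^ 2) :
    2 * hsInner σ (-N + (1 / 2 : ℝ) • Z) w + S ≤ (2 * C₁ + C₂) * P * Q := by
  have hPQ : hsNorm σ w ^ 2 ≤ P * Q :=
    hQ.trans (le_mul_of_one_le_left ((sq_nonneg _).trans hQ) hP)
  have hC₂PQ := mul_le_mul_of_nonneg_left hPQ hC₂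
  rw [two_mul_hsInner_neg_add_half_smul hN hZ hw]
  linarith [neg_le_of_abs_le convection]

lemma gCH2_sub (hσ : 0 ≤ σ) (hξ : SqSummableWiener ((σ + 2) / 2) ξ) (hη : memHs (σ + 2) η)
    (hρ : memHs (σ + 2) ρ) :
    gCH2 ξ u η - gCH2 ξ v ρ = -(mul u (D1 η) - mul v (D1 ρ)) +
      (1 / 2 : ℝ) • tsumFC fun k => lie2 (ξ k) (η - ρ) := by
  rw [tsumFC_lie2_sub hσ hξ hη hρ, gCH2, gCH2, smul_sub]
  abel

lemma hsNorm_hCH2_sub (hσ : 0 ≤ σ) (hξ : memWiener ((σ + 1) / 2) (ξ k)) (hη : memHs (σ + 1) η)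
    (hρ : memHs (σ + 1) ρ) :
    hsNorm σ (hCH2 ξ k η - hCH2 ξ k ρ) = hsNorm σ (lie (ξ k) (η - ρ)) := by
  rw [lie_sub hσ hξ hη hρ, hCH2, hCH2, ← neg_sub', hsNorm_neg]

lemma gCH1_sub (hσ : 0 ≤ σ) (hξ : SqSummableWiener ((σ + 2) / 2) ξ) (hu : memHs (σ + 2 + 2) u)
    (hv : memHs (σ + 2 + 2) v) :
    gCH1 ξ u - gCH1 ξ v = -(mul u (D1 u) - mul v (D1 v)) +
      (1 / 2 : ℝ) • helmInv (tsumFC fun k => lie2 (ξ k) (helm (u - v))) := by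
  rw [helm_sub, tsumFC_lie2_sub hσ hξ (memHs_helm.2 hu) (memHs_helm.2 hv), helmInv_sub, gCH1,
    gCH1, smul_sub]
  abel

lemma hsNorm_hCH1_sub (hσ : 0 ≤ σ) (hξ : memWiener ((σ + 1) / 2) (ξ k))
    (hu : memHs (σ + 1 + 2) u) (hv : memHs (σ + 1 + 2) v) :
    hsNorm (σ + 2) (hCH1 ξ k u - hCH1 ξ k v) = hsNorm σ (lie (ξ k) (helm (u - v))) := by
  rw [helm_sub, lie_sub hσ hξ (memHs_helm.2 hu) (memHs_helm.2 hv), hCH1, hCH1, ← neg_sub',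
    hsNorm_neg, ← helmInv_sub, hsNorm_helmInv]

lemma exists_hsInner_gCH2_sub_add_tsum_le (hσ : 0 ≤ σ) (hξ : SqSummableWiener (σ + 1) ξ)
    (hξreal : ∀ k, isReal (ξ k)) : ∃ C > 0, ∀ u η v ρ : FC, isReal u →
    memHs (σ + 2) u → memHs (σ + 2) η → memHs (σ + 2) v → memHs (σ + 2) ρ →
    Summable (fun k => hsNorm σ (hCH2 ξ k η - hCH2 ξ k ρ) ^ 2) ∧
    2 * hsInner σ (gCH2 ξ u η - gCH2 ξ v ρ) (η - ρ) +
        ∑' k, hsNorm σ (hCH2 ξ k η - hCH2 ξ k ρ) ^ 2 ≤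
      C * (1 + hsNorm (σ + 2) u ^ 2 + hsNorm (σ + 2) ρ ^ 2) *
        (hsNorm σ (u - v) ^ 2 + hsNorm σ (η - ρ) ^ 2) := by
  obtain ⟨C₁, hC₁, convection⟩ := exists_abs_hsInner_convection_sub_le hσ
  obtain ⟨C₂, hC₂, noise⟩ := exists_hsInner_tsumFC_lie2_add_le hσ hξ hξreal
  refine ⟨2 * C₁ + C₂, by positivity, fun u η v ρ u_real hu hη hv hρ => ?_⟩
  have lower {f : FC} (hf : memHs (σ + 2) f) : memHs (σ + 1) f := hf.mono (by linarith)
  have hξ₁ : SqSummableWiener ((σ + 1) / 2) ξ := hξ.mono (by linarith)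
  have hξ₂ : SqSummableWiener ((σ + 2) / 2) ξ := hξ.mono (by linarith)
  simp only [gCH2_sub hσ hξ₂ hη hρ, fun k => hsNorm_hCH2_sub hσ (hξ₁.mem k) (lower hη) (lower hρ)]
  refine ⟨summable_hsNorm_lie_sq hσ hξ₁ (lower (hη.sub hρ)), ?_⟩
  exact two_mul_hsInner_drift_add_le
    ((memHs_mul_D1 hσ hu (lower hη)).sub (memHs_mul_D1 hσ hv (lower hρ)))
    (memHs_tsumFC_lie2 hσ hξ₂ (hη.sub hρ)) ((hη.sub hρ).mono (by linarith)) hC₂.le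
    (by linarith [sq_nonneg (hsNorm (σ + 2) u), sq_nonneg (hsNorm (σ + 2) ρ)])
    (by linarith [sq_nonneg (hsNorm σ (u - v))])
    (convection u v η ρ u_real hu hv (lower hη) hρ) (noise _ (hη.sub hρ))

lemma exists_hsInner_gCH1_sub_add_tsum_le (hσ : 0 ≤ σ) (hξ : SqSummableWiener (σ + 1) ξ)
    (hξreal : ∀ k, isReal (ξ k)) : ∃ C > 0, ∀ u v : FC, isReal u →
    memHs (σ + 2 + 2) u → memHs (σ + 2 + 2) v →
    Summable (fun k => hsNorm (σ + 2) (hCH1 ξ k u - hCH1 ξ k v) ^ 2) ∧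
    2 * hsInner (σ + 2) (gCH1 ξ u - gCH1 ξ v) (u - v) +
        ∑' k, hsNorm (σ + 2) (hCH1 ξ k u - hCH1 ξ k v) ^ 2 ≤
      C * (1 + hsNorm (σ + 2 + 2) u ^ 2 + hsNorm (σ + 2 + 2) v ^ 2) *
        hsNorm (σ + 2) (u - v) ^ 2 := by
  have hσ₂ : 0 ≤ σ + 2 := by linarith
  obtain ⟨C₁, hC₁, convection⟩ := exists_abs_hsInner_convection_sub_le hσ₂
  obtain ⟨C₂, hC₂, noise⟩ := exists_hsInner_tsumFC_lie2_add_le hσ hξ hξreal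
  refine ⟨(2 * C₁ + C₂) * 2, by positivity, fun u v u_real hu hv => ?_⟩
  have lower {t : ℝ} {f : FC} (hf : memHs (σ + 2 + 2) f) (ht : t ≤ σ + 2 + 2) : memHs t f :=
    hf.mono ht
  have hw : memHs (σ + 2 + 2) (u - v) := hu.sub hv
  have hξ₁ : SqSummableWiener ((σ + 1) / 2) ξ := hξ.mono (by linarith)
  have hξ₂ : SqSummableWiener ((σ + 2) / 2) ξ := hξ.mono (by linarith)
  have noise_w := noise (helm (u - v)) (memHs_helm.2 hw)
  rw [hsInner_helm_right, hsNorm_helm] at noise_w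
  simp only [gCH1_sub hσ hξ₂ hu hv,
    fun k => hsNorm_hCH1_sub hσ (hξ₁.mem k) (lower hu (by linarith)) (lower hv (by linarith))]
  refine ⟨summable_hsNorm_lie_sq hσ hξ₁ (memHs_helm.2 (lower hw (by linarith))), ?_⟩
  refine (two_mul_hsInner_drift_add_le
    ((memHs_mul_D1 hσ₂ hu (lower hu (by linarith))).sub
      (memHs_mul_D1 hσ₂ hv (lower hv (by linarith))))
    (memHs_tsumFC_lie2 hσ hξ₂ (memHs_helm.2 hw)).helmInv (lower hw (by linarith)) hC₂.le
    (by linarith [sq_nonneg (hsNorm (σ + 2 + 2) u), sq_nonneg (hsNorm (σ + 2 + 2) v)])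
    (by linarith [sq_nonneg (hsNorm (σ + 2) (u - v))])
    (convection u v u v u_real hu hv (lower hu (by linarith)) hv) noise_w).trans_eq ?_
  ring

lemma SqSummableWiener.of_summable_hsNorm {m s : ℝ} (h : 2 * m + 1 ≤ s)
    (hξ : ∀ k, memHs s (ξ k)) (hsum : Summable fun k => hsNorm s (ξ k)) :
    SqSummableWiener m ξ := by
  obtain ⟨K, -, le⟩ := exists_wienerNorm_le
  have nonneg (k : ℕ) : 0 ≤ wienerNorm m (ξ k) := wienerNorm_nonneg m (ξ k)
  have summable : Summable fun k => wienerNorm m (ξ k) :=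
    (hsum.mul_left K).of_nonneg_of_le nonneg fun k => (le h (hξ k)).2
  refine ⟨fun k => (le h (hξ k)).1, ?_⟩
  simp only [sq]
  exact (summable.mul_of_nonneg summable nonneg nonneg).comp_injective
    (i := fun k => (k, k)) fun _ _ hk => congrArg Prod.fst hk

lemma pairNorm_sq (s₁ s₂ : ℝ) (c d : FC) :
    pairNorm s₁ s₂ c d ^ 2 = hsNorm s₁ c ^ 2 + hsNorm s₂ d ^ 2 :=
  Real.sq_sqrt (by positivity)

end CamassaHolm

end FC

theorem statement3_general (s : ℝ) (hs : 4 ≤ s) (ξ : ℕ → FC)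
    (hξ : FC.SqSummableWiener (s - 2) ξ) (hξreal : ∀ k : ℕ, FC.isReal (ξ k)) :
    ∃ C > (0 : ℝ), ∀ u η v ρ : FC,
      FC.memHs s u → FC.memHs (s - 1) η → FC.memHs s v → FC.memHs (s - 1) ρ → FC.isReal u →
      Summable (fun k : ℕ =>
        FC.pairNorm (s - 2) (s - 3) (hCH1 ξ k u - hCH1 ξ k v) (hCH2 ξ k η - hCH2 ξ k ρ) ^ 2) ∧
      2 * FC.pairInner (s - 2) (s - 3)
            (gCH1 ξ u - gCH1 ξ v) (gCH2 ξ u η - gCH2 ξ v ρ) (u - v) (η - ρ)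
        + ∑' k : ℕ, FC.pairNorm (s - 2) (s - 3)
            (hCH1 ξ k u - hCH1 ξ k v) (hCH2 ξ k η - hCH2 ξ k ρ) ^ 2
        ≤ C * (1 + FC.pairNorm s (s - 1) u η ^ 2 + FC.pairNorm s (s - 1) v ρ ^ 2)
            * FC.pairNorm (s - 2) (s - 3) (u - v) (η - ρ) ^ 2 := by
  obtain ⟨C₁, hC₁, first⟩ := FC.exists_hsInner_gCH1_sub_add_tsum_le (σ := s - 4) (by linarith)
    (hξ.mono (by linarith)) hξreal
  obtain ⟨C₂, hC₂, second⟩ := FC.exists_hsInner_gCH2_sub_add_tsum_le (σ := s - 3) (by linarith)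
    (hξ.mono (by linarith)) hξreal
  rw [show s - 4 + 2 = s - 2 by ring, sub_add_cancel] at first
  rw [show s - 3 + 2 = s - 1 by ring] at second
  refine ⟨C₁ + C₂, by positivity, fun u η v ρ hu hη hv hρ u_real => ?_⟩
  obtain ⟨summable₁, le₁⟩ := first u v u_real hu hv
  obtain ⟨summable₂, le₂⟩ := second u η v ρ u_real (hu.mono (by linarith)) hη
    (hv.mono (by linarith)) hρ
  have hu_le := FC.hsNorm_sq_mono hu (show s - 1 ≤ s by linarith)
  have hw_le := FC.hsNorm_sq_mono ((hu.sub hv).mono (by linarith)) (show s - 3 ≤ s - 2 by linarith)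
  simp only [FC.pairInner, FC.pairNorm_sq]
  refine ⟨summable₁.add summable₂, ?_⟩
  rw [summable₁.tsum_add summable₂, mul_add, add_add_add_comm, add_mul, add_mul]
  refine add_le_add (le₁.trans ?_) (le₂.trans ?_)
  · gcongr <;> exact le_add_of_nonneg_right (sq_nonneg _)
  · gcongr
    · exact hu_le.trans (le_add_of_nonneg_right (sq_nonneg _))
    · exact le_add_of_nonneg_left (sq_nonneg _)

/-- Let `s > 11/2` and `Σ_k ‖ξ_k‖_{H^σ} < ∞` for all `σ ≥ 0`.  Then there is
`C > 0` such that for all `X = (u,η)`, `Y = (v,ρ)` in `H^s(𝕋) × H^{s-1}(𝕋)`: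
`2 (g(X)−g(Y), X−Y)_{H^{s-2}×H^{s-3}} + Σ_k ‖h^k(X)−h^k(Y)‖²_{H^{s-2}×H^{s-3}}`
`≤ C (1 + ‖X‖²_{H^s×H^{s-1}} + ‖Y‖²_{H^s×H^{s-1}}) ‖X−Y‖²_{H^{s-2}×H^{s-3}}`. -/
theorem statement3 (s : ℝ) (hs : 11 / 2 < s) (ξ : ℕ → FC)
    (hξmem : ∀ σ : ℝ, 0 ≤ σ → ∀ k : ℕ, FC.memHs σ (ξ k))
    (hξreal : ∀ k : ℕ, FC.isReal (ξ k))
    (hξsum : ∀ σ : ℝ, 0 ≤ σ → Summable fun k : ℕ => FC.hsNorm σ (ξ k)) :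
    ∃ C > (0 : ℝ), ∀ u η v ρ : FC,
      FC.memHs s u → FC.memHs (s - 1) η → FC.memHs s v → FC.memHs (s - 1) ρ →
      FC.isReal u → FC.isReal η → FC.isReal v → FC.isReal ρ →
      Summable (fun k : ℕ =>
        FC.pairNorm (s - 2) (s - 3) (hCH1 ξ k u - hCH1 ξ k v) (hCH2 ξ k η - hCH2 ξ k ρ) ^ 2) ∧
      2 * FC.pairInner (s - 2) (s - 3)
            (gCH1 ξ u - gCH1 ξ v) (gCH2 ξ u η - gCH2 ξ v ρ) (u - v) (η - ρ)
        + ∑' k : ℕ, FC.pairNorm (s - 2) (s - 3)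
            (hCH1 ξ k u - hCH1 ξ k v) (hCH2 ξ k η - hCH2 ξ k ρ) ^ 2
        ≤ C * (1 + FC.pairNorm s (s - 1) u η ^ 2 + FC.pairNorm s (s - 1) v ρ ^ 2)
            * FC.pairNorm (s - 2) (s - 3) (u - v) (η - ρ) ^ 2 := by
  obtain ⟨C, hC, bound⟩ := statement3_general s (by linarith) ξ
    (.of_summable_hsNorm le_rfl (hξmem _ (by linarith)) (hξsum _ (by linarith))) hξreal
  exact ⟨C, hC, fun u η v ρ hu hη hv hρ u_real _ _ _ => bound u η v ρ hu hη hv hρ u_real⟩
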